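/- arXiv:1905.08470 — 2 statements merged into one kernel-verified Lean document; each statement's English description precedes it below -/
import Mathlib

section
/- In the Wilson–Xiang setting, assume |A| = |B| = (q+1)/2 and |A_e| + |B_o| = |A_o| + |B_e| − 2(−1)^{(q−1)/2}, and set E_0 = D_0 ∪ D_2 ∪ D_3. If (a,b) ∈ F_{q²} × F_{q²} and exactly one of a, b is zero, then ψ_{a,b}(E_0) = (−3q²−1)/4 if a = 0 and b ∈ C_1^{(2,q²)}, and ψ_{a,b}(E_0) = (q²−1)/4 otherwise. -/
noncomputable section

def zetaP (p : ℕ) : ℂ := Complex.exp (2 * Real.pi * Complex.I / p)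

/-- The canonical additive character `ψ(x) = ζ_p^{Tr_{L/F_p}(x)}`. -/
def psiL (p : ℕ) (L : Type) [Field L] [Fintype L] [CharP L p] (x : L) : ℂ :=
  letI : Algebra (ZMod p) L := ZMod.algebra L p
  zetaP p ^ (Algebra.trace (ZMod p) L x).val

/-- `ψ_{a,b}(E) = Σ_{(x,y)∈E} ψ(ax+by)`. -/
def psiSum (p : ℕ) (L : Type) [Field L] [Fintype L] [CharP L p]
    (a b : L) (E : Set (L × L)) : ℂ :=
  ∑ᶠ z ∈ E, psiL p L (a * z.1 + b * z.2)

/-- a subset of `F_{q²} × F_{q²}` of type Q. -/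
def IsTypeQ (p q : ℕ) (L : Type) [Field L] [Fintype L] [CharP L p]
    (E : Set (L × L)) : Prop :=
  E.ncard = (q ^ 4 - 1) / 4 ∧
    ∀ a b : L, (a, b) ≠ ((0 : L), (0 : L)) →
      psiSum p L a b E = ((q : ℂ) ^ 2 - 1) / 4 ∨
      psiSum p L a b E = (-3 * (q : ℂ) ^ 2 - 1) / 4

/-- the cyclotomic class `C_i^{(N,q²)} = ω^i⟨ω^N⟩`. -/
def cyc (L : Type) [Field L] (ω : L) (N i : ℕ) : Set L :=
  {x | ∃ k : ℕ, x = ω ^ i * (ω ^ N) ^ k}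

/-- ω is a primitive element (generator of the multiplicative group). -/
def IsPrim (L : Type) [Field L] (ω : L) : Prop :=
  ∀ x : L, x ≠ 0 → ∃ n : ℕ, x = ω ^ n

/-- nonzero squares of `K` -/
def sqSet (K : Type) [Field K] : Set K := {y | ∃ z : K, z ≠ 0 ∧ y = z ^ 2}

/-!
The additive character `ψ` of `L = F_{q²}` is lifted from `K = F_q` along the trace, and the
quadratic character `χ` of `L` is trivial on `K^*`, so Stickelberger's averaging over `K^*`
evaluates its Gauss sum as `G = q χ(δ)` for any `δ ≠ 0` of trace zero. From `δ^(q - 1) = -1` one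
gets `χ(δ) = (-1)^((q + 1) / 2) = (-1)^τ`.

When one of `a, b` vanishes, `ψ(ax + by)` depends on one coordinate only, and the sum over each of
`D₀, D₂, D₃` is either a count or a combination of sums of `ψ` over dilated classes
`u C_ε = {u y | χ(y) = ε}`, each equal to `(-1 + ε χ(u) G) / 2`. In the second coordinate the
dilation factor `ω^i` contributes the sign `(-1)^i`, so the sets `A, B` enter only through their
cardinalities and their even/odd imbalance.
-/

open scoped Finset

section TraceLift

variable {K L R : Type*} [Field K] [Field L] [Algebra K L]

/-- The additive character `φ ∘ Tr_{L/K}` of `L` lifted from a character `φ` of the subfield `K`;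
the canonical character of `L` is the case where `K` is the prime field. -/
def traceLift [CommRing R] (L : Type*) [Field L] [Algebra K L] (φ : AddChar K R) :
    AddChar L R :=
  φ.compAddMonoidHom (Algebra.trace K L).toAddMonoidHom

theorem traceLift_apply [CommRing R] (φ : AddChar K R) (y : L) :
    traceLift L φ y = φ (Algebra.trace K L y) :=
  rfl

theorem traceLift_traceLift [CommRing R] {k : Type*} [Field k] [Algebra k K] [Algebra k L]
    [IsScalarTower k K L] [FiniteDimensional k K] [FiniteDimensional K L] (φ : AddChar k R) :
    traceLift L (traceLift K φ) = traceLift L φ := by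
  ext y
  simp only [traceLift_apply, Algebra.trace_trace]

theorem isPrimitive_traceLift [CommRing R] [FiniteDimensional K L] [Algebra.IsSeparable K L]
    {φ : AddChar K R} (hφ : φ.IsPrimitive) : (traceLift L φ).IsPrimitive := by
  obtain ⟨x, hx⟩ := AddChar.ne_one_iff.1 (hφ one_ne_zero)
  obtain ⟨y, hy⟩ := Algebra.trace_surjective K L x
  refine AddChar.IsPrimitive.of_ne_one (AddChar.ne_one_iff.2 ⟨y, ?_⟩)
  simpa only [traceLift_apply, hy, AddChar.mulShift_apply, one_mul] using hx

theorem sum_traceLift_algebraMap_mul [Fintype K] [DecidableEq K] [CommRing R] [IsDomain R]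
    {φ : AddChar K R} (hφ : φ.IsPrimitive) (y : L) :
    ∑ x : K, traceLift L φ (algebraMap K L x * y) =
      if Algebra.trace K L y = 0 then (Fintype.card K : R) else 0 := by
  have h := AddChar.sum_mulShift (Algebra.trace K L y) hφ
  rw [Nat.cast_ite, Nat.cast_zero] at h
  simpa only [traceLift_apply, ← Algebra.smul_def, map_smul, smul_eq_mul] using h

end TraceLift

theorem psiL_eq_traceLift_stdAddChar (p : ℕ) (L : Type) [Field L] [Fintype L]
    [CharP L p] [Fact p.Prime] [Algebra (ZMod p) L] (x : L) :
    psiL p L x = traceLift L (ZMod.stdAddChar (N := p)) x := by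
  rw [traceLift_apply, ZMod.stdAddChar_apply, ZMod.toCircle_apply, psiL, zetaP,
    ← Complex.exp_nat_mul, Subsingleton.elim (ZMod.algebra L p) ‹Algebra (ZMod p) L›]
  congr 1
  ring

theorem exists_isPrimitive_psiL_eq_traceLift (p : ℕ) (K : Type*) (L : Type) [Field K]
    [Field L] [Fintype L] [Algebra K L] [CharP L p] :
    ∃ φ : AddChar K ℂ, φ.IsPrimitive ∧ ∀ x, psiL p L x = traceLift L φ x := by
  have : Fact p.Prime := ⟨CharP.char_is_prime L p⟩
  have : Finite K := .of_injective _ (algebraMap K L).injective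
  have : CharP K p := (algebraMap K L).charP (algebraMap K L).injective p
  let _ : Algebra (ZMod p) L := ZMod.algebra L p
  let _ : Algebra (ZMod p) K := ZMod.algebra K p
  have : IsScalarTower (ZMod p) K L := .of_algebraMap_eq' (RingHom.ext_zmod _ _)
  refine ⟨traceLift K (ZMod.stdAddChar (N := p)),
    isPrimitive_traceLift (φ := ZMod.stdAddChar (N := p)) (ZMod.isPrimitive_stdAddChar p),
    fun x => ?_⟩
  rw [psiL_eq_traceLift_stdAddChar, traceLift_traceLift]

theorem psiSum_coe_finset (p : ℕ) (L : Type) [Field L] [Fintype L] [CharP L p] (a b : L)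
    (E : Finset (L × L)) : psiSum p L a b E = ∑ w ∈ E, psiL p L (a * w.1 + b * w.2) :=
  finsum_mem_coe_finset _ _

section QuadraticClass

variable {F R : Type*} [Field F] [Fintype F] [DecidableEq F]

/-- The nonzero squares (`ε = 1`) or the nonsquares (`ε = -1`) of `F`, that is, the cyclotomic
classes of order two. Indexing by a unit of `ℤ` keeps `0` out of both classes. -/
def quadraticClass (F : Type*) [Field F] [Fintype F] [DecidableEq F] (ε : ℤˣ) : Finset F :=
  Finset.univ.filter fun y => quadraticChar F y = ε

/-- The Gauss sum `∑ χ(y) ψ(y)` of the quadratic character `χ` of `F`, whose integer values are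
cast into the ring in which `ψ` takes its values. -/
def quadraticGaussSum [CommRing R] (ψ : AddChar F R) : R :=
  gaussSum ((quadraticChar F).ringHomComp (Int.castRingHom R)) ψ

theorem mem_quadraticClass {ε : ℤˣ} {y : F} :
    y ∈ quadraticClass F ε ↔ quadraticChar F y = ε := by
  simp only [quadraticClass, Finset.mem_filter, Finset.mem_univ, true_and]

theorem ne_zero_of_mem_quadraticClass {ε : ℤˣ} {y : F} (hy : y ∈ quadraticClass F ε) : y ≠ 0 := by
  rintro rfl
  rw [mem_quadraticClass, quadraticChar_zero] at hy
  exact ε.ne_zero hy.symm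

theorem quadraticChar_inv (y : F) : quadraticChar F y⁻¹ = quadraticChar F y := by
  rw [← MulChar.inv_apply', (quadraticChar_isQuadratic F).inv]

theorem sum_quadraticClass_inv [AddCommMonoid R] (ε : ℤˣ) (f : F → R) :
    ∑ y ∈ quadraticClass F ε, f y⁻¹ = ∑ y ∈ quadraticClass F ε, f y :=
  Finset.sum_equiv (Equiv.inv F)
    (fun y => by rw [mem_quadraticClass, mem_quadraticClass, Equiv.inv_apply, quadraticChar_inv])
    fun _ _ => rfl

theorem sum_quadraticChar_mul_addChar [CommRing R] (ψ : AddChar F R) {b : F} (hb : b ≠ 0) :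
    ∑ y, (quadraticChar F y : R) * ψ (b * y) = quadraticChar F b * quadraticGaussSum ψ := by
  have hshift := gaussSum_mulShift ((quadraticChar F).ringHomComp (Int.castRingHom R)) ψ
    (Units.mk0 b hb)
  have hsq : (quadraticChar F b : R) * quadraticChar F b = 1 := by
    exact_mod_cast congrArg (Int.cast : ℤ → R) ((sq _).symm.trans (quadraticChar_sq_one hb))
  rw [quadraticGaussSum, ← hshift, MulChar.ringHomComp_apply, eq_intCast, Units.val_mk0,
    ← mul_assoc, hsq, one_mul]
  rfl

variable [Field R] [CharZero R]

theorem sum_quadraticClass (ε : ℤˣ) (f : F → R) :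
    ∑ y ∈ quadraticClass F ε, f y =
      (∑ y, f y - f 0 + (ε : ℤ) * ∑ y, (quadraticChar F y : R) * f y) / 2 := by
  have indicator (y : F) : (if quadraticChar F y = ε then f y else 0) =
      (f y - (if y = 0 then f y else 0) + (ε : ℤ) * ((quadraticChar F y : R) * f y)) / 2 := by
    rcases eq_or_ne y 0 with rfl | hy
    · simp [ε.ne_zero.symm]
    · rcases quadraticChar_dichotomy hy with h | h <;>
        rcases Int.units_eq_one_or ε with rfl | rfl <;> simp [h, hy]
  rw [quadraticClass, Finset.sum_filter]
  simp only [indicator, ← Finset.sum_div, Finset.sum_add_distrib, Finset.sum_sub_distrib,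
    ← Finset.mul_sum, Finset.sum_ite_eq', Finset.mem_univ, if_true]

theorem card_quadraticClass (hF : ringChar F ≠ 2) (ε : ℤˣ) :
    ((quadraticClass F ε).card : R) = (Fintype.card F - 1) / 2 := by
  have hχ : ∑ y, (quadraticChar F y : R) = 0 := by
    exact_mod_cast congrArg (Int.cast : ℤ → R) (quadraticChar_sum_zero hF)
  simpa only [Finset.sum_const, nsmul_eq_mul, mul_one, hχ, mul_zero, add_zero, Finset.card_univ]
    using sum_quadraticClass ε fun _ : F => (1 : R)

theorem sum_quadraticClass_addChar {ψ : AddChar F R} (hψ : ψ.IsPrimitive) (ε : ℤˣ) {b : F}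
    (hb : b ≠ 0) :
    ∑ y ∈ quadraticClass F ε, ψ (b * y) =
      (-1 + (ε : ℤ) * (quadraticChar F b * quadraticGaussSum ψ)) / 2 := by
  have hsum : ∑ y, ψ (b * y) = 0 := AddChar.sum_eq_zero_of_ne_one (hψ hb)
  rw [sum_quadraticClass, hsum, sum_quadraticChar_mul_addChar ψ hb, mul_zero,
    AddChar.map_zero_eq_one, zero_sub]

end QuadraticClass

theorem odd_card_of_ringChar_ne_two {K L : Type*} [Field K] [Fintype K] [Field L] [Algebra K L]
    (hL : ringChar L ≠ 2) : Odd (Fintype.card K) :=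
  Nat.odd_iff.2 (FiniteField.odd_card_of_char_ne_two (Algebra.ringChar_eq K L ▸ hL))

section TraceKernel

variable {K L : Type*} [Field K] [Field L] [Algebra K L] [Algebra.IsSeparable K L]

theorem finrank_ker_trace (hKL : Module.finrank K L = 2) :
    Module.finrank K (Algebra.trace K L).ker = 1 := by
  have : FiniteDimensional K L := .of_finrank_pos (by omega)
  have h := (Algebra.trace K L).finrank_range_add_finrank_ker
  rw [LinearMap.range_eq_top.2 (Algebra.trace_surjective K L), finrank_top, Module.finrank_self,
    hKL] at h
  omega

theorem exists_ne_zero_trace_eq_zero (hKL : Module.finrank K L = 2) :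
    ∃ δ : L, δ ≠ 0 ∧ Algebra.trace K L δ = 0 := by
  obtain ⟨δ, hδ, -⟩ := finrank_eq_one_iff'.1 (finrank_ker_trace (K := K) hKL)
  exact ⟨δ, by simpa using hδ, δ.2⟩

theorem trace_eq_zero_iff_exists_smul_eq (hKL : Module.finrank K L = 2) {δ : L} (hδ₀ : δ ≠ 0)
    (hδ : Algebra.trace K L δ = 0) (y : L) : Algebra.trace K L y = 0 ↔ ∃ x : K, x • δ = y := by
  constructor
  · intro hy
    have hspan := (finrank_eq_one_iff_of_nonzero' (⟨δ, hδ⟩ : (Algebra.trace K L).ker)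
      (fun h => hδ₀ (congrArg Subtype.val h))).1 (finrank_ker_trace hKL) ⟨y, hy⟩
    exact hspan.imp fun x hx => congrArg Subtype.val hx
  · rintro ⟨x, rfl⟩
    rw [map_smul, hδ, smul_zero]

end TraceKernel

section QuadraticExtension

variable {K L R : Type*} [Field K] [Field L] [Algebra K L]

theorem card_div_two [Fintype K] [Fintype L] (hL : ringChar L ≠ 2)
    (hKL : Module.finrank K L = 2) :
    Fintype.card L / 2 = (Fintype.card K - 1) * ((Fintype.card K + 1) / 2) := by
  obtain ⟨m, hm⟩ := odd_card_of_ringChar_ne_two (K := K) hL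
  rw [Module.card_eq_pow_finrank (K := K), hKL, hm, show (2 * m + 1 + 1) / 2 = m + 1 by omega,
    Nat.add_sub_cancel, show (2 * m + 1) ^ 2 = 2 * (2 * m * (m + 1)) + 1 by ring]
  omega

theorem quadraticChar_algebraMap [Fintype L] [DecidableEq L] (hL : ringChar L ≠ 2)
    (hKL : Module.finrank K L = 2) {x : K} (hx : x ≠ 0) :
    quadraticChar L (algebraMap K L x) = 1 := by
  have : Finite K := .of_injective _ (algebraMap K L).injective
  cases nonempty_fintype K
  have hx' : algebraMap K L x ≠ 0 := (map_ne_zero _).2 hx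
  rw [quadraticChar_eq_pow_of_char_ne_two hL hx', card_div_two hL hKL, pow_mul, ← map_pow,
    FiniteField.pow_card_sub_one_eq_one x hx, map_one, one_pow, if_pos rfl]

variable [Fintype K]

theorem pow_card_sub_one_of_trace_eq_zero (hKL : Module.finrank K L = 2) {δ : L} (hδ₀ : δ ≠ 0)
    (hδ : Algebra.trace K L δ = 0) : δ ^ (Fintype.card K - 1) = -1 := by
  have : FiniteDimensional K L := .of_finrank_pos (by omega)
  have : Finite L := Module.finite_of_finite K
  have h : δ + δ ^ Fintype.card K = 0 := by
    simpa [hδ, hKL, Finset.sum_range_succ] using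
      (FiniteField.algebraMap_trace_eq_sum_pow K L δ).symm
  refine mul_left_cancel₀ hδ₀ ?_
  rw [← pow_succ', Nat.sub_add_cancel Fintype.card_pos]
  linear_combination h

variable [Fintype L]

theorem quadraticChar_of_trace_eq_zero [DecidableEq L] (hL : ringChar L ≠ 2)
    (hKL : Module.finrank K L = 2) {δ : L} (hδ₀ : δ ≠ 0) (hδ : Algebra.trace K L δ = 0) :
    quadraticChar L δ = (-1) ^ ((Fintype.card K + 1) / 2) := by
  have h := quadraticChar_eq_pow_of_char_ne_two' hL δ
  rw [card_div_two hL hKL, pow_mul, pow_card_sub_one_of_trace_eq_zero hKL hδ₀ hδ] at h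
  refine Int.cast_injOn_of_ringChar_ne_two hL ?_ ?_ (by exact_mod_cast h)
  · exact .inr (quadraticChar_dichotomy hδ₀)
  · exact .inr (neg_one_pow_eq_or ℤ _)

theorem sum_mulChar_trace_eq_zero [DecidableEq K] [CommRing R] (hKL : Module.finrank K L = 2)
    {χ : MulChar L R} (hχK : ∀ x : K, x ≠ 0 → χ (algebraMap K L x) = 1)
    {δ : L} (hδ₀ : δ ≠ 0) (hδ : Algebra.trace K L δ = 0) :
    ∑ y : L with Algebra.trace K L y = 0, χ y = (Fintype.card K - 1) * χ δ := by
  have hterm (x : K) : χ (x • δ) = χ δ - if x = 0 then χ δ else 0 := by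
    rcases eq_or_ne x 0 with rfl | hx
    · rw [zero_smul, χ.map_zero, if_pos rfl, sub_self]
    · rw [Algebra.smul_def, map_mul, hχK x hx, one_mul, if_neg hx, sub_zero]
  calc ∑ y : L with Algebra.trace K L y = 0, χ y = ∑ x : K, χ (x • δ) := by
        refine (Finset.sum_bij (fun x _ => x • δ) ?_ ?_ ?_ fun _ _ => rfl).symm
        · exact fun x _ => by simp [hδ]
        · exact fun x _ x' _ h => smul_left_injective K hδ₀ h
        · intro y hy
          obtain ⟨x, hx⟩ := (trace_eq_zero_iff_exists_smul_eq hKL hδ₀ hδ y).1 (by simpa using hy)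
          exact ⟨x, Finset.mem_univ x, hx⟩
    _ = (Fintype.card K - 1) * χ δ := by
        simp only [hterm, Finset.sum_sub_distrib, Finset.sum_const, Finset.sum_ite_eq',
          Finset.mem_univ, if_true, Finset.card_univ, nsmul_eq_mul, sub_one_mul]

theorem card_mul_sum_mulChar_trace_eq_zero [DecidableEq K] [CommRing R] [IsDomain R]
    {χ : MulChar L R} (hχ : χ ≠ 1) (hχK : ∀ x : K, x ≠ 0 → χ (algebraMap K L x) = 1)
    {φ : AddChar K R} (hφ : φ.IsPrimitive) :
    (Fintype.card K : R) * ∑ y : L with Algebra.trace K L y = 0, χ y =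
      (Fintype.card K - 1) * gaussSum χ (traceLift L φ) := by
  set G := gaussSum χ (traceLift L φ)
  have hshift (x : K) : ∑ y, χ y * traceLift L φ (algebraMap K L x * y) =
      G - if x = 0 then G else 0 := by
    rcases eq_or_ne x 0 with rfl | hx
    · simp [MulChar.sum_eq_zero_of_ne_one hχ]
    · have hx' : algebraMap K L x ≠ 0 := (map_ne_zero _).2 hx
      have h := gaussSum_mulShift χ (traceLift L φ) (Units.mk0 _ hx')
      rw [Units.val_mk0, hχK x hx, one_mul] at h
      rw [if_neg hx, sub_zero]
      exact h
  calc (Fintype.card K : R) * ∑ y : L with Algebra.trace K L y = 0, χ y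
      = ∑ y, χ y * ∑ x : K, traceLift L φ (algebraMap K L x * y) := by
        simp only [sum_traceLift_algebraMap_mul hφ, mul_ite, mul_zero, ← Finset.sum_filter,
          ← Finset.sum_mul]
        exact mul_comm _ _
    _ = ∑ x : K, ∑ y, χ y * traceLift L φ (algebraMap K L x * y) := by
        simp only [Finset.mul_sum]
        exact Finset.sum_comm
    _ = (Fintype.card K - 1) * G := by
        simp only [hshift, Finset.sum_sub_distrib, Finset.sum_const, Finset.sum_ite_eq',
          Finset.mem_univ, if_true, Finset.card_univ, nsmul_eq_mul, sub_one_mul]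

theorem gaussSum_traceLift [CommRing R] [IsDomain R] [CharZero R] (hKL : Module.finrank K L = 2)
    {χ : MulChar L R} (hχ : χ ≠ 1) (hχK : ∀ x : K, x ≠ 0 → χ (algebraMap K L x) = 1)
    {φ : AddChar K R} (hφ : φ.IsPrimitive) {δ : L} (hδ₀ : δ ≠ 0)
    (hδ : Algebra.trace K L δ = 0) :
    gaussSum χ (traceLift L φ) = Fintype.card K * χ δ := by
  classical
  have hq : (Fintype.card K : R) - 1 ≠ 0 :=
    sub_ne_zero.2 (by exact_mod_cast Fintype.one_lt_card.ne')
  refine mul_left_cancel₀ hq ?_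
  rw [← card_mul_sum_mulChar_trace_eq_zero hχ hχK hφ, sum_mulChar_trace_eq_zero hKL hχK hδ₀ hδ,
    mul_left_comm]

theorem quadraticGaussSum_traceLift [DecidableEq L] [CommRing R] [IsDomain R] [CharZero R]
    (hL : ringChar L ≠ 2) (hKL : Module.finrank K L = 2) {φ : AddChar K R} (hφ : φ.IsPrimitive) :
    quadraticGaussSum (traceLift L φ) =
      Fintype.card K * (-1) ^ ((Fintype.card K + 1) / 2) := by
  obtain ⟨δ, hδ₀, hδ⟩ := exists_ne_zero_trace_eq_zero (K := K) hKL
  have hχ : (quadraticChar L).ringHomComp (Int.castRingHom R) ≠ 1 :=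
    (MulChar.ringHomComp_ne_one_iff (RingHom.injective_int _)).2 (quadraticChar_ne_one hL)
  rw [quadraticGaussSum, gaussSum_traceLift hKL hχ ?_ hφ hδ₀ hδ, MulChar.ringHomComp_apply,
    quadraticChar_of_trace_eq_zero hL hKL hδ₀ hδ]
  · simp
  · intro x hx
    rw [MulChar.ringHomComp_apply, quadraticChar_algebraMap hL hKL hx, map_one]

end QuadraticExtension

namespace IsPrim

variable {L : Type} [Field L] {ω : L}

theorem not_isSquare [Finite L] (hω : IsPrim L ω) (hL : ringChar L ≠ 2) : ¬IsSquare ω := by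
  obtain ⟨a, ha⟩ := FiniteField.exists_nonsquare hL
  obtain ⟨n, rfl⟩ := hω a (by rintro rfl; exact ha .zero)
  exact fun h => ha (h.pow n)

theorem ne_zero [Finite L] (hω : IsPrim L ω) (hL : ringChar L ≠ 2) : ω ≠ 0 := by
  rintro rfl
  exact hω.not_isSquare hL .zero

variable [Fintype L]

theorem orderOf_eq (hω : IsPrim L ω) (hL : ringChar L ≠ 2) :
    orderOf ω = Fintype.card L - 1 := by
  classical
  have h : orderOf (Units.mk0 ω (hω.ne_zero hL)) = Nat.card Lˣ := by
    refine orderOf_eq_card_of_forall_mem_powers fun u => ?_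
    obtain ⟨n, hn⟩ := hω u u.ne_zero
    exact ⟨n, Units.ext (by simp [hn])⟩
  rwa [← orderOf_units, Units.val_mk0, Nat.card_eq_fintype_card, Fintype.card_units] at h

variable [DecidableEq L]

theorem quadraticChar_eq_neg_one (hω : IsPrim L ω) (hL : ringChar L ≠ 2) :
    quadraticChar L ω = -1 :=
  quadraticChar_neg_one_iff_not_isSquare.2 (hω.not_isSquare hL)

theorem cyc_two_eq (hω : IsPrim L ω) (hL : ringChar L ≠ 2) (i : ℕ) :
    cyc L ω 2 i = quadraticClass L ((-1) ^ i) := by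
  have hχ := hω.quadraticChar_eq_neg_one hL
  ext y
  rw [Finset.mem_coe, mem_quadraticClass, Units.val_pow_eq_pow_val, Units.val_neg, Units.val_one]
  constructor
  · rintro ⟨k, rfl⟩
    rw [map_mul, map_pow, map_pow, map_pow, hχ, neg_one_sq, one_pow, mul_one]
  · intro hy
    have hi : ω ^ i ≠ 0 := pow_ne_zero i (hω.ne_zero hL)
    have hy₀ : y ≠ 0 := by
      rintro rfl
      exact pow_ne_zero i (by norm_num : (-1 : ℤ) ≠ 0) (by rw [← hy, quadraticChar_zero])
    obtain ⟨n, hn⟩ := hω (y / ω ^ i) (div_ne_zero hy₀ hi)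
    have hyn : y = ω ^ i * ω ^ n := by rw [← hn, mul_div_cancel₀ _ hi]
    have hn_even : (-1 : ℤ) ^ n = 1 := by
      rw [hyn, map_mul, map_pow, map_pow, hχ] at hy
      exact mul_left_cancel₀ (pow_ne_zero i (by norm_num)) (hy.trans (mul_one _).symm)
    obtain ⟨k, rfl⟩ := (neg_one_pow_eq_one_iff_even (by norm_num)).1 hn_even
    exact ⟨k, by rw [hyn, ← pow_mul, two_mul]⟩

end IsPrim

section HyperbolicPairs

variable {K : Type*} {L : Type} [Field K] [Field L] [Algebra K L] {ω : L}

/-- The point `(xy, xy⁻¹ω^i)` attached to `t = (x, i, y)`; the product of its coordinates is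
`x²ω^i`. -/
def hyperbolicPair (ω : L) (t : Kˣ × ℕ × L) : L × L :=
  (algebraMap K L t.1 * t.2.2, algebraMap K L t.1 * t.2.2⁻¹ * ω ^ t.2.1)

variable [Fintype K]

theorem index_eq_of_sq_mul_pow_eq (hω : IsPrim L ω) (hL : ringChar L ≠ 2)
    (hKL : Module.finrank K L = 2) {x x' : Kˣ} {i i' : ℕ} (hi : i < 2 * Fintype.card K + 2)
    (hi' : i' < 2 * Fintype.card K + 2)
    (h : algebraMap K L x' ^ 2 * ω ^ i' = algebraMap K L x ^ 2 * ω ^ i) : i' = i := by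
  have : FiniteDimensional K L := .of_finrank_pos (by omega)
  have : Finite L := Module.finite_of_finite K
  cases nonempty_fintype L
  obtain ⟨m, hm⟩ := odd_card_of_ringChar_ne_two (K := K) hL
  have hm₀ : 0 < m := by
    have := Fintype.one_lt_card (α := K)
    omega
  have hsq (z : Kˣ) : (algebraMap K L z ^ 2) ^ m = 1 := by
    have hz := FiniteField.pow_card_sub_one_eq_one (z : K) z.ne_zero
    rw [hm, Nat.add_sub_cancel] at hz
    rw [← pow_mul, ← map_pow, hz, map_one]
  have hpow : ω ^ (i' * m) = ω ^ (i * m) := by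
    simpa only [mul_pow, hsq, one_mul, ← pow_mul] using congrArg (· ^ m) h
  have hord : orderOf ω = (2 * Fintype.card K + 2) * m := by
    rw [hω.orderOf_eq hL, Module.card_eq_pow_finrank (K := K), hKL, hm,
      show (2 * m + 1) ^ 2 = (2 * (2 * m + 1) + 2) * m + 1 by ring, Nat.add_sub_cancel]
  have hlt {j : ℕ} (hj : j < 2 * Fintype.card K + 2) : j * m < orderOf ω :=
    hord ▸ Nat.mul_lt_mul_of_pos_right hj hm₀
  exact Nat.eq_of_mul_eq_mul_right hm₀ (pow_injOn_Iio_orderOf (hlt hi') (hlt hi) hpow)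

theorem hyperbolicPair_eq_iff (hω : IsPrim L ω) (hL : ringChar L ≠ 2)
    (hKL : Module.finrank K L = 2) {x x' : Kˣ} {i i' : ℕ} {y y' : L}
    (hi : i < 2 * Fintype.card K + 2) (hi' : i' < 2 * Fintype.card K + 2)
    (hy : y ≠ 0) (hy' : y' ≠ 0) :
    hyperbolicPair ω (x', i', y') = hyperbolicPair ω (x, i, y) ↔
      (x', i', y') = (x, i, y) ∨ (x', i', y') = (-x, i, -y) := by
  have : FiniteDimensional K L := .of_finrank_pos (by omega)
  have : Finite L := Module.finite_of_finite K
  simp only [hyperbolicPair, Prod.mk.injEq]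
  constructor
  · rintro ⟨hfst, hsnd⟩
    have hprod : algebraMap K L x' ^ 2 * ω ^ i' = algebraMap K L x ^ 2 * ω ^ i := by
      have h := congrArg₂ (· * ·) hfst hsnd
      field_simp at h
      linear_combination h
    obtain rfl := index_eq_of_sq_mul_pow_eq hω hL hKL hi hi' hprod
    have hx : algebraMap K L x ≠ 0 := (map_ne_zero _).2 x.ne_zero
    have hx_sq := mul_right_cancel₀ (pow_ne_zero _ (hω.ne_zero hL)) hprod
    rcases sq_eq_sq_iff_eq_or_eq_neg.1 hx_sq with hx' | hx'
    · rw [hx'] at hfst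
      exact .inl ⟨Units.ext ((algebraMap K L).injective hx'), rfl, mul_left_cancel₀ hx hfst⟩
    · rw [hx'] at hfst
      refine .inr ⟨Units.ext ((algebraMap K L).injective ?_), rfl, mul_left_cancel₀ hx ?_⟩
      · rw [hx', Units.val_neg, map_neg]
      · linear_combination -hfst
  · rintro (⟨rfl, rfl, rfl⟩ | ⟨rfl, rfl, rfl⟩)
    · exact ⟨rfl, rfl⟩
    · simp [inv_neg]

variable [DecidableEq K] [Fintype L] [DecidableEq L]

/-- The set `{(xy, xy⁻¹ω^i) | x ∈ K^*, i ∈ S, χ(y) = ε}`: the paper's `D₂` for `ε = 1, S = A` and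
`D₃` for `ε = -1, S = B`. -/
def hyperbolicPairs (K : Type*) [Field K] [Fintype K] [DecidableEq K] [Algebra K L] (ω : L)
    (ε : ℤˣ) (S : Finset ℕ) : Finset (L × L) :=
  (Finset.univ ×ˢ S ×ˢ quadraticClass L ε).image (hyperbolicPair (K := K) ω)

theorem coe_hyperbolicPairs (ε : ℤˣ) (S : Finset ℕ) :
    (hyperbolicPairs K ω ε S : Set (L × L)) = {w | ∃ x : K, x ≠ 0 ∧ ∃ y ∈ quadraticClass L ε,
      ∃ i ∈ S, w = (algebraMap K L x * y, algebraMap K L x * y⁻¹ * ω ^ i)} := by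
  ext w
  simp only [hyperbolicPairs, Finset.coe_image, Set.mem_image, Finset.mem_coe, Finset.mem_product,
    Finset.mem_univ, true_and, Prod.exists, hyperbolicPair, Set.mem_ofPred_eq]
  constructor
  · rintro ⟨x, i, y, ⟨hi, hy⟩, rfl⟩
    exact ⟨x, x.ne_zero, y, hy, i, hi, rfl⟩
  · rintro ⟨x, hx, y, hy, i, hi, rfl⟩
    exact ⟨Units.mk0 x hx, i, y, ⟨hi, hy⟩, rfl⟩

theorem quadraticChar_fst_of_mem_hyperbolicPairs (hL : ringChar L ≠ 2)
    (hKL : Module.finrank K L = 2) {ε : ℤˣ} {S : Finset ℕ} {w : L × L}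
    (hw : w ∈ hyperbolicPairs K ω ε S) : quadraticChar L w.1 = ε := by
  obtain ⟨⟨x, i, y⟩, ht, rfl⟩ := Finset.mem_image.1 hw
  simp only [Finset.mem_product, mem_quadraticClass] at ht
  rw [hyperbolicPair, map_mul, quadraticChar_algebraMap hL hKL x.ne_zero, one_mul, ht.2.2]

theorem card_filter_hyperbolicPair_eq (hω : IsPrim L ω) (hL : ringChar L ≠ 2)
    (hKL : Module.finrank K L = 2) {ε : ℤˣ} {S : Finset ℕ}
    (hS : ∀ i ∈ S, i < 2 * Fintype.card K + 2) {w : L × L} (hw : w ∈ hyperbolicPairs K ω ε S) :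
    #{t ∈ (Finset.univ : Finset Kˣ) ×ˢ S ×ˢ quadraticClass L ε | hyperbolicPair ω t = w} = 2 := by
  obtain ⟨⟨x, i, y⟩, ht, rfl⟩ := Finset.mem_image.1 hw
  simp only [Finset.mem_product, Finset.mem_univ, true_and] at ht
  obtain ⟨hi, hy⟩ := ht
  have hy₀ := ne_zero_of_mem_quadraticClass hy
  have hneg : -y ∈ quadraticClass L ε := by
    have h := quadraticChar_algebraMap hL hKL (neg_ne_zero.2 (one_ne_zero (α := K)))
    rw [map_neg, map_one] at h
    rwa [mem_quadraticClass, neg_eq_neg_one_mul, map_mul, h, one_mul, ← mem_quadraticClass]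
  refine Finset.card_eq_two.2 ⟨(x, i, y), (-x, i, -y), ?_, ?_⟩
  · intro h
    exact Ring.eq_self_iff_eq_zero_of_char_ne_two hL |>.not.2 hy₀ (congrArg (·.2.2) h).symm
  · ext ⟨x', i', y'⟩
    simp only [Finset.mem_filter, Finset.mem_product, Finset.mem_univ, true_and,
      Finset.mem_insert, Finset.mem_singleton]
    constructor
    · rintro ⟨⟨hi', hy'⟩, h⟩
      exact (hyperbolicPair_eq_iff hω hL hKL (hS i hi) (hS i' hi') hy₀
        (ne_zero_of_mem_quadraticClass hy')).1 h
    · intro h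
      have hmem : i' ∈ S ∧ y' ∈ quadraticClass L ε := by
        rcases h with h | h <;> obtain ⟨-, rfl, rfl⟩ := h
        exacts [⟨hi, hy⟩, ⟨hi, hneg⟩]
      exact ⟨hmem, (hyperbolicPair_eq_iff hω hL hKL (hS i hi) (hS i' hmem.1) hy₀
        (ne_zero_of_mem_quadraticClass hmem.2)).2 h⟩

theorem two_mul_sum_hyperbolicPairs {R : Type*} [CommRing R] (hω : IsPrim L ω)
    (hL : ringChar L ≠ 2) (hKL : Module.finrank K L = 2) (ε : ℤˣ) {S : Finset ℕ}
    (hS : ∀ i ∈ S, i < 2 * Fintype.card K + 2) (g : L × L → R) :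
    2 * ∑ w ∈ hyperbolicPairs K ω ε S, g w =
      ∑ x : Kˣ, ∑ i ∈ S, ∑ y ∈ quadraticClass L ε, g (hyperbolicPair ω (x, i, y)) := by
  simp only [← Finset.sum_product']
  rw [Finset.sum_comp g (hyperbolicPair ω), Finset.mul_sum]
  refine Finset.sum_congr rfl fun w hw => ?_
  rw [card_filter_hyperbolicPair_eq hω hL hKL hS hw, nsmul_eq_mul, Nat.cast_ofNat]

variable {R : Type*} [Field R] [CharZero R] {ψ : AddChar L R}

theorem sum_hyperbolicPairs_addChar_fst (hω : IsPrim L ω) (hL : ringChar L ≠ 2)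
    (hKL : Module.finrank K L = 2) (hψ : ψ.IsPrimitive) (ε : ℤˣ) {S : Finset ℕ}
    (hS : ∀ i ∈ S, i < 2 * Fintype.card K + 2) {a : L} (ha : a ≠ 0) :
    ∑ w ∈ hyperbolicPairs K ω ε S, ψ (a * w.1) =
      (Fintype.card K - 1) / 4 *
        (#S * (-1 + (ε : ℤ) * (quadraticChar L a * quadraticGaussSum ψ))) := by
  have hclass (x : Kˣ) : ∑ y ∈ quadraticClass L ε, ψ (a * (algebraMap K L x * y)) =
      (-1 + (ε : ℤ) * (quadraticChar L a * quadraticGaussSum ψ)) / 2 := by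
    have hx : algebraMap K L x ≠ 0 := (map_ne_zero _).2 x.ne_zero
    simp only [← mul_assoc a]
    rw [sum_quadraticClass_addChar hψ ε (mul_ne_zero ha hx), map_mul,
      quadraticChar_algebraMap hL hKL x.ne_zero, mul_one]
  have h := two_mul_sum_hyperbolicPairs hω hL hKL ε hS fun w => ψ (a * w.1)
  simp only [hyperbolicPair, hclass, Finset.sum_const, nsmul_eq_mul, Finset.card_univ,
    Fintype.card_units, Nat.cast_pred Fintype.card_pos] at h
  linear_combination h / 2

theorem sum_hyperbolicPairs_addChar_snd (hω : IsPrim L ω) (hL : ringChar L ≠ 2)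
    (hKL : Module.finrank K L = 2) (hψ : ψ.IsPrimitive) (ε : ℤˣ) {S : Finset ℕ}
    (hS : ∀ i ∈ S, i < 2 * Fintype.card K + 2) {b : L} (hb : b ≠ 0) :
    ∑ w ∈ hyperbolicPairs K ω ε S, ψ (b * w.2) =
      (Fintype.card K - 1) / 4 *
        (-#S + (ε : ℤ) * (quadraticChar L b * quadraticGaussSum ψ) * ∑ i ∈ S, (-1) ^ i) := by
  have hclass (x : Kˣ) (i : ℕ) :
      ∑ y ∈ quadraticClass L ε, ψ (b * (algebraMap K L x * y⁻¹ * ω ^ i)) =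
        (-1 + (ε : ℤ) * (quadraticChar L b * quadraticGaussSum ψ) * (-1) ^ i) / 2 := by
    have hx : algebraMap K L x ≠ 0 := (map_ne_zero _).2 x.ne_zero
    have hu : b * algebraMap K L x * ω ^ i ≠ 0 :=
      mul_ne_zero (mul_ne_zero hb hx) (pow_ne_zero i (hω.ne_zero hL))
    have hχu : quadraticChar L (b * algebraMap K L x * ω ^ i) =
        quadraticChar L b * (-1) ^ i := by
      rw [map_mul, map_mul, map_pow, quadraticChar_algebraMap hL hKL x.ne_zero, mul_one,
        hω.quadraticChar_eq_neg_one hL]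
    rw [sum_quadraticClass_inv ε fun y => ψ (b * (algebraMap K L x * y * ω ^ i))]
    simp only [show ∀ y, b * (algebraMap K L x * y * ω ^ i) = b * algebraMap K L x * ω ^ i * y
      from fun y => by ring]
    rw [sum_quadraticClass_addChar hψ ε hu, hχu]
    push_cast
    ring
  have h := two_mul_sum_hyperbolicPairs hω hL hKL ε hS fun w => ψ (b * w.2)
  simp only [hyperbolicPair, hclass, ← Finset.sum_div, Finset.sum_add_distrib, ← Finset.mul_sum,
    Finset.sum_const, nsmul_eq_mul, Finset.card_univ, Fintype.card_units,
    Nat.cast_pred Fintype.card_pos] at h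
  linear_combination h / 2

end HyperbolicPairs

section WilsonXiangSet

variable {K : Type*} {L : Type} [Field K] [Fintype K] [DecidableEq K] [Field L] [Fintype L]
  [DecidableEq L] [Algebra K L] {ω : L} {A B : Finset ℕ}

/-- The paper's `E₀ = D₀ ∪ D₂ ∪ D₃`, where the sign `ε` stands for `(-1)^τ`. -/
def wilsonXiangE₀ (K : Type*) [Field K] [Fintype K] [DecidableEq K] [Algebra K L] (ω : L)
    (ε : ℤˣ) (A B : Finset ℕ) : Finset (L × L) :=
  {0} ×ˢ quadraticClass L ε ∪ hyperbolicPairs K ω 1 A ∪ hyperbolicPairs K ω (-1) B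

theorem coe_wilsonXiangE₀ (hω : IsPrim L ω) (hL : ringChar L ≠ 2) (τ : ℕ) :
    (wilsonXiangE₀ K ω ((-1) ^ τ) A B : Set (L × L)) =
      {w | ∃ y ∈ cyc L ω 2 τ, w = (0, y)} ∪
      {w | ∃ x : K, x ≠ 0 ∧ ∃ y ∈ cyc L ω 2 0, ∃ i ∈ A,
        w = (algebraMap K L x * y, algebraMap K L x * y⁻¹ * ω ^ i)} ∪
      {w | ∃ x : K, x ≠ 0 ∧ ∃ y ∈ cyc L ω 2 1, ∃ i ∈ B,
        w = (algebraMap K L x * y, algebraMap K L x * y⁻¹ * ω ^ i)} := by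
  rw [wilsonXiangE₀, Finset.coe_union, Finset.coe_union, coe_hyperbolicPairs, coe_hyperbolicPairs]
  simp only [hω.cyc_two_eq hL, pow_zero, pow_one, Finset.mem_coe]
  congr 2
  ext ⟨u, v⟩
  simp [eq_comm, and_comm]

theorem sum_wilsonXiangE₀ {R : Type*} [AddCommMonoid R] (hL : ringChar L ≠ 2)
    (hKL : Module.finrank K L = 2) (ε : ℤˣ) (g : L × L → R) :
    ∑ w ∈ wilsonXiangE₀ K ω ε A B, g w = ∑ y ∈ quadraticClass L ε, g (0, y) +
      ∑ w ∈ hyperbolicPairs K ω 1 A, g w + ∑ w ∈ hyperbolicPairs K ω (-1) B, g w := by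
  have hχ_axis {w : L × L} (hw : w ∈ ({0} : Finset L) ×ˢ quadraticClass L ε) :
      quadraticChar L w.1 = 0 := by
    rw [Finset.mem_singleton.1 (Finset.mem_product.1 hw).1, quadraticChar_zero]
  have hχ_pairs {η : ℤˣ} {S : Finset ℕ} {w : L × L} (hw : w ∈ hyperbolicPairs K ω η S) :
      quadraticChar L w.1 = η := quadraticChar_fst_of_mem_hyperbolicPairs hL hKL hw
  have hdisj_A : Disjoint (({0} : Finset L) ×ˢ quadraticClass L ε) (hyperbolicPairs K ω 1 A) :=
    Finset.disjoint_left.2 fun w hw hw' => by simpa using (hχ_axis hw).symm.trans (hχ_pairs hw')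
  have hdisj_B : Disjoint (({0} : Finset L) ×ˢ quadraticClass L ε ∪ hyperbolicPairs K ω 1 A)
      (hyperbolicPairs K ω (-1) B) := by
    refine Finset.disjoint_left.2 fun w hw hw' => ?_
    rcases Finset.mem_union.1 hw with hw | hw
    · simpa using (hχ_axis hw).symm.trans (hχ_pairs hw')
    · exact absurd ((hχ_pairs hw).symm.trans (hχ_pairs hw')) (by decide)
  rw [wilsonXiangE₀, Finset.sum_union hdisj_B, Finset.sum_union hdisj_A, Finset.sum_product,
    Finset.sum_singleton]

variable {R : Type*} [Field R] [CharZero R] {ψ : AddChar L R}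

theorem sum_wilsonXiangE₀_addChar_fst (hω : IsPrim L ω) (hL : ringChar L ≠ 2)
    (hKL : Module.finrank K L = 2) (hψ : ψ.IsPrimitive) (ε : ℤˣ)
    (hA : ∀ i ∈ A, i < 2 * Fintype.card K + 2) (hB : ∀ i ∈ B, i < 2 * Fintype.card K + 2)
    {a : L} (ha : a ≠ 0) :
    ∑ w ∈ wilsonXiangE₀ K ω ε A B, ψ (a * w.1) =
      ((Fintype.card K : R) ^ 2 - 1) / 2 + (Fintype.card K - 1) / 4 *
        (-(#A + #B) + (#A - #B) * (quadraticChar L a * quadraticGaussSum ψ)) := by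
  rw [sum_wilsonXiangE₀ hL hKL, sum_hyperbolicPairs_addChar_fst hω hL hKL hψ 1 hA ha,
    sum_hyperbolicPairs_addChar_fst hω hL hKL hψ (-1) hB ha]
  simp only [mul_zero, AddChar.map_zero_eq_one, Finset.sum_const, nsmul_eq_mul, mul_one,
    card_quadraticClass hL, Module.card_eq_pow_finrank (K := K) (V := L), hKL]
  push_cast
  ring

theorem sum_wilsonXiangE₀_addChar_snd (hω : IsPrim L ω) (hL : ringChar L ≠ 2)
    (hKL : Module.finrank K L = 2) (hψ : ψ.IsPrimitive) (ε : ℤˣ)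
    (hA : ∀ i ∈ A, i < 2 * Fintype.card K + 2) (hB : ∀ i ∈ B, i < 2 * Fintype.card K + 2)
    {b : L} (hb : b ≠ 0) :
    ∑ w ∈ wilsonXiangE₀ K ω ε A B, ψ (b * w.2) =
      (-1 + (ε : ℤ) * (quadraticChar L b * quadraticGaussSum ψ)) / 2 +
        (Fintype.card K - 1) / 4 * (-(#A + #B) + quadraticChar L b * quadraticGaussSum ψ *
          (∑ i ∈ A, (-1) ^ i - ∑ i ∈ B, (-1) ^ i)) := by
  rw [sum_wilsonXiangE₀ hL hKL, sum_quadraticClass_addChar hψ ε hb,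
    sum_hyperbolicPairs_addChar_snd hω hL hKL hψ 1 hA hb,
    sum_hyperbolicPairs_addChar_snd hω hL hKL hψ (-1) hB hb]
  push_cast
  ring

end WilsonXiangSet

theorem sum_neg_one_pow_eq_ncard_sub_ncard {R : Type*} [Ring R] (S : Finset ℕ) :
    ∑ i ∈ S, (-1 : R) ^ i =
      ((S : Set ℕ) ∩ {i | Even i}).ncard - ((S : Set ℕ) ∩ {i | Odd i}).ncard := by
  have heven : (S : Set ℕ) ∩ {i | Even i} = ↑{i ∈ S | Even i} := by ext; simp
  have hodd : (S : Set ℕ) ∩ {i | Odd i} = ↑{i ∈ S | ¬Even i} := by ext; simp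
  have hterm (i : ℕ) : (-1 : R) ^ i = if Even i then 1 else -1 := by
    split_ifs with h
    exacts [h.neg_one_pow, (Nat.not_even_iff_odd.1 h).neg_one_pow]
  rw [heven, hodd, Set.ncard_coe_finset, Set.ncard_coe_finset]
  simp only [hterm, Finset.sum_ite, Finset.sum_const, nsmul_eq_mul, mul_one, mul_neg,
    sub_eq_add_neg]

theorem neg_one_pow_half_eq {q τ : ℕ} (hq : Odd q) (hτ : τ = if q % 4 = 3 then 0 else 1) :
    (-1 : ℤ) ^ ((q + 1) / 2) = (-1) ^ τ ∧ (-1 : ℤ) ^ ((q - 1) / 2) = -(-1) ^ τ := by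
  obtain ⟨m, rfl⟩ := hq
  rw [show (2 * m + 1 + 1) / 2 = m + 1 by omega, show (2 * m + 1 - 1) / 2 = m by omega,
    pow_succ, mul_neg_one]
  suffices (-1 : ℤ) ^ m = -(-1) ^ τ by rw [this, neg_neg]; exact ⟨rfl, rfl⟩
  rw [hτ]
  split_ifs with h
  · exact (Nat.odd_iff.2 (by omega) : Odd m).neg_one_pow
  · simpa using (Nat.even_iff.2 (by omega) : Even m).neg_one_pow

section Evaluation

variable {p : ℕ} {K : Type*} {L : Type} [Field K] [Fintype K] [DecidableEq K] [Field L]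
  [Fintype L] [DecidableEq L] [Algebra K L] [CharP L p] {ω : L} {A B : Finset ℕ}

theorem psiSum_wilsonXiangE₀_right_zero (hL : ringChar L ≠ 2) (hKL : Module.finrank K L = 2)
    (hω : IsPrim L ω) (ε : ℤˣ) (hA : ∀ i ∈ A, i < 2 * Fintype.card K + 2)
    (hB : ∀ i ∈ B, i < 2 * Fintype.card K + 2)
    (hcardA : 2 * #A = Fintype.card K + 1) (hcardB : 2 * #B = Fintype.card K + 1)
    {a : L} (ha : a ≠ 0) :
    psiSum p L a 0 (wilsonXiangE₀ K ω ε A B) = ((Fintype.card K : ℂ) ^ 2 - 1) / 4 := by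
  obtain ⟨φ, hφ, hψ⟩ := exists_isPrimitive_psiL_eq_traceLift p K L
  have hA' : 2 * (#A : ℂ) = Fintype.card K + 1 := by exact_mod_cast hcardA
  have hB' : 2 * (#B : ℂ) = Fintype.card K + 1 := by exact_mod_cast hcardB
  simp only [psiSum_coe_finset, hψ, zero_mul, add_zero]
  rw [sum_wilsonXiangE₀_addChar_fst hω hL hKL (isPrimitive_traceLift hφ) ε hA hB ha,
    show (#A : ℂ) = (Fintype.card K + 1) / 2 by linear_combination hA' / 2,
    show (#B : ℂ) = (Fintype.card K + 1) / 2 by linear_combination hB' / 2]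
  ring

theorem psiSum_wilsonXiangE₀_left_zero (hL : ringChar L ≠ 2) (hKL : Module.finrank K L = 2)
    (hω : IsPrim L ω) {ε : ℤˣ} (hε : (ε : ℤ) = (-1) ^ ((Fintype.card K + 1) / 2))
    (hA : ∀ i ∈ A, i < 2 * Fintype.card K + 2) (hB : ∀ i ∈ B, i < 2 * Fintype.card K + 2)
    (hcardA : 2 * #A = Fintype.card K + 1) (hcardB : 2 * #B = Fintype.card K + 1)
    (hparity : ∑ i ∈ A, (-1 : ℤ) ^ i - ∑ i ∈ B, (-1) ^ i = 2 * ε) {b : L} (hb : b ≠ 0) :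
    psiSum p L 0 b (wilsonXiangE₀ K ω ε A B) =
      (2 * quadraticChar L b * (Fintype.card K : ℂ) ^ 2 - (Fintype.card K : ℂ) ^ 2 - 1) / 4 := by
  obtain ⟨φ, hφ, hψ⟩ := exists_isPrimitive_psiL_eq_traceLift p K L
  have hA' : 2 * (#A : ℂ) = Fintype.card K + 1 := by exact_mod_cast hcardA
  have hB' : 2 * (#B : ℂ) = Fintype.card K + 1 := by exact_mod_cast hcardB
  have hG : quadraticGaussSum (traceLift L φ) = Fintype.card K * ((ε : ℤ) : ℂ) := by
    rw [quadraticGaussSum_traceLift hL hKL hφ, hε]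
    push_cast
    rfl
  have hε_sq : ((ε : ℤ) : ℂ) * ((ε : ℤ) : ℂ) = 1 := by
    exact_mod_cast congrArg (Int.cast : ℤ → ℂ) (Int.units_coe_mul_self ε)
  have hparity' : ∑ i ∈ A, (-1 : ℂ) ^ i - ∑ i ∈ B, (-1) ^ i = 2 * (ε : ℤ) := by
    exact_mod_cast congrArg (Int.cast : ℤ → ℂ) hparity
  simp only [psiSum_coe_finset, hψ, zero_mul, zero_add]
  rw [sum_wilsonXiangE₀_addChar_snd hω hL hKL (isPrimitive_traceLift hφ) ε hA hB hb, hG, hparity',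
    show (#A : ℂ) = (Fintype.card K + 1) / 2 by linear_combination hA' / 2,
    show (#B : ℂ) = (Fintype.card K + 1) / 2 by linear_combination hB' / 2]
  linear_combination (quadraticChar L b : ℂ) * (Fintype.card K : ℂ) ^ 2 / 2 * hε_sq

end Evaluation

theorem wilson_xiang_E0_char_one_zero_general {p q : ℕ} (hp : p ≠ 2) {K : Type*} {L : Type}
    [Field K] [Fintype K] [Field L] [Fintype L] [Algebra K L] [CharP L p]
    (hK : Fintype.card K = q) (hL : Fintype.card L = q ^ 2) {ω : L} (hω : IsPrim L ω) {τ : ℕ}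
    (hτ : τ = if q % 4 = 3 then 0 else 1) {A B : Set ℕ} (hA : ∀ i ∈ A, i < 2 * q + 2)
    (hB : ∀ i ∈ B, i < 2 * q + 2) {D₀ D₂ D₃ : Set (L × L)}
    (hD₀ : D₀ = {w | ∃ y ∈ cyc L ω 2 τ, w = ((0 : L), y)})
    (hD₂ : D₂ = {w | ∃ x : K, x ≠ 0 ∧ ∃ y ∈ cyc L ω 2 0, ∃ i ∈ A,
      w = (algebraMap K L x * y, algebraMap K L x * y⁻¹ * ω ^ i)})
    (hD₃ : D₃ = {w | ∃ x : K, x ≠ 0 ∧ ∃ y ∈ cyc L ω 2 1, ∃ i ∈ B,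
      w = (algebraMap K L x * y, algebraMap K L x * y⁻¹ * ω ^ i)})
    (hcardA : A.ncard = (q + 1) / 2) (hcardB : B.ncard = (q + 1) / 2)
    (hpar : ((A ∩ {i | Even i}).ncard : ℤ) + (B ∩ {i | Odd i}).ncard =
      ((A ∩ {i | Odd i}).ncard : ℤ) + (B ∩ {i | Even i}).ncard - 2 * (-1) ^ ((q - 1) / 2))
    (a b : L) (hab : (a = 0 ∧ b ≠ 0) ∨ (a ≠ 0 ∧ b = 0)) :
    ((a = 0 ∧ b ∈ cyc L ω 2 1) →
      psiSum p L a b (D₀ ∪ D₂ ∪ D₃) = (-3 * (q : ℂ) ^ 2 - 1) / 4) ∧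
    (¬(a = 0 ∧ b ∈ cyc L ω 2 1) →
      psiSum p L a b (D₀ ∪ D₂ ∪ D₃) = ((q : ℂ) ^ 2 - 1) / 4) := by
  classical
  subst hK
  have hchar : ringChar L ≠ 2 := ringChar.eq L p ▸ hp
  have hodd : Odd (Fintype.card K) := odd_card_of_ringChar_ne_two hchar
  have hKL : Module.finrank K L = 2 := Nat.pow_right_injective Fintype.one_lt_card
    (Module.card_eq_pow_finrank.symm.trans hL)
  obtain ⟨hτ_add, hτ_sub⟩ := neg_one_pow_half_eq hodd hτ
  lift A to Finset ℕ using (Set.finite_Iio _).subset hA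
  lift B to Finset ℕ using (Set.finite_Iio _).subset hB
  rw [Set.ncard_coe_finset] at hcardA hcardB
  have hcardA' : 2 * #A = Fintype.card K + 1 := by grind
  have hcardB' : 2 * #B = Fintype.card K + 1 := by grind
  have hparity : ∑ i ∈ A, (-1 : ℤ) ^ i - ∑ i ∈ B, (-1) ^ i = 2 * ((-1) ^ τ : ℤˣ) := by
    rw [sum_neg_one_pow_eq_ncard_sub_ncard, sum_neg_one_pow_eq_ncard_sub_ncard]
    push_cast
    linear_combination hpar - 2 * hτ_sub
  have hb_mem : b ∈ cyc L ω 2 1 ↔ quadraticChar L b = -1 := by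
    rw [hω.cyc_two_eq hchar, Finset.mem_coe, mem_quadraticClass]
    rfl
  have hE : D₀ ∪ D₂ ∪ D₃ = wilsonXiangE₀ K ω ((-1) ^ τ) A B := by
    rw [coe_wilsonXiangE₀ hω hchar, hD₀, hD₂, hD₃]
    rfl
  rw [hE, hb_mem]
  rcases hab with ⟨rfl, hb⟩ | ⟨ha, rfl⟩
  · rw [psiSum_wilsonXiangE₀_left_zero hchar hKL hω (by simp [hτ_add]) hA hB hcardA' hcardB'
      hparity hb]
    rcases quadraticChar_dichotomy hb with h | h <;> norm_num [h]
    all_goals ring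
  · rw [psiSum_wilsonXiangE₀_right_zero hchar hKL hω _ hA hB hcardA' hcardB' ha]
    simp [ha]

/-- Lemma 4.2: character values of `E₀ = D₀ ∪ D₂ ∪ D₃` when exactly one of
`a, b` is zero. -/
theorem wilson_xiang_E0_char_one_zero
    (p s q : ℕ) (hp : p.Prime) (hpodd : p ≠ 2) (hs : 0 < s) (hq : q = p ^ s)
    (K L : Type) [Field K] [Fintype K] [Field L] [Fintype L] [Algebra K L] [CharP L p]
    (hK : Fintype.card K = q) (hL : Fintype.card L = q ^ 2)
    (ω : L) (hω : IsPrim L ω)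
    (c : ℕ) (hc : c < 2 * q + 2) (hcodd : Odd c)
    (I₁ I₂ J₁ J₂ : Set ℕ)
    (hI₁ : I₁ = {i | i < 2 * q + 2 ∧ Algebra.trace K L (ω ^ i) = 0})
    (hI₂ : I₂ = {i | i < 2 * q + 2 ∧ Algebra.trace K L (ω ^ i) ∈ sqSet K})
    (hJ₁ : J₁ = {i | i < 2 * q + 2 ∧ Algebra.trace K L (ω ^ (i + c)) = 0})
    (hJ₂ : J₂ = {i | i < 2 * q + 2 ∧ Algebra.trace K L (ω ^ (i + c)) ∈ sqSet K})
    (X₁c X₃c : Set ℕ)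
    (hX₁c : X₁c = (I₁ ∩ J₂) ∪ (I₂ ∩ J₁)) (hX₃c : X₃c = I₂ ∩ J₂)
    (τ : ℕ) (hτ : τ = if q % 4 = 3 then 0 else 1)
    (A B : Set ℕ) (hA : ∀ i ∈ A, i < 2 * q + 2) (hB : ∀ i ∈ B, i < 2 * q + 2)
    (hAB : A ∩ B = X₃c) (hABsym : (A \ B) ∪ (B \ A) = X₁c)
    (D₀ D₁ D₂ D₃ : Set (L × L))
    (hD₀ : D₀ = {w | ∃ y ∈ cyc L ω 2 τ, w = ((0 : L), y)})
    (hD₁ : D₁ = {w | ∃ y ∈ cyc L ω 2 0, w = (y, (0 : L))})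
    (hD₂ : D₂ = {w | ∃ x : K, x ≠ 0 ∧ ∃ y ∈ cyc L ω 2 0, ∃ i ∈ A,
      w = (algebraMap K L x * y, algebraMap K L x * y⁻¹ * ω ^ i)})
    (hD₃ : D₃ = {w | ∃ x : K, x ≠ 0 ∧ ∃ y ∈ cyc L ω 2 1, ∃ i ∈ B,
      w = (algebraMap K L x * y, algebraMap K L x * y⁻¹ * ω ^ i)})
    (hcardA : A.ncard = (q + 1) / 2) (hcardB : B.ncard = (q + 1) / 2)
    (hpar : ((A ∩ {i | Even i}).ncard : ℤ) + (B ∩ {i | Odd i}).ncard =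
      ((A ∩ {i | Odd i}).ncard : ℤ) + (B ∩ {i | Even i}).ncard
        - 2 * (-1) ^ ((q - 1) / 2))
    : ∀ a b : L, ((a = 0 ∧ b ≠ 0) ∨ (a ≠ 0 ∧ b = 0)) →
      ((a = 0 ∧ b ∈ cyc L ω 2 1) →
        psiSum p L a b (D₀ ∪ D₂ ∪ D₃) = (-3 * (q : ℂ) ^ 2 - 1) / 4) ∧
      (¬(a = 0 ∧ b ∈ cyc L ω 2 1) →
        psiSum p L a b (D₀ ∪ D₂ ∪ D₃) = ((q : ℂ) ^ 2 - 1) / 4) := by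
  exact wilson_xiang_E0_char_one_zero_general hpodd hK hL hω hτ hA hB hD₀ hD₂ hD₃ hcardA hcardB hpar

end
end

section
/- Let q be a power of an odd prime p, ω a primitive element of F_{q²}, ψ the canonical additive character of F_{q²} (ψ(x) = ζ_p^{Tr_{q²/p}(x)}), and A, B arbitrary subsets of {0,1,...,2q+1}. For a, b ∈ F_{q²} with a ≠ 0 and b ≠ 0, define V_2 = (1/2) Σ_{i∈A} Σ_{y∈C_0^{(2,q²)}} Σ_{x∈F_q^*} ψ(axy)ψ(bxy^{−1}ω^i) and V_3 = (1/2) Σ_{i∈B} Σ_{y∈C_1^{(2,q²)}} Σ_{x∈F_q^*} ψ(axy)ψ(bxy^{−1}ω^i). Let χ_{2(q+1)} be a multiplicative character of F_{q²} of order 2(q+1) and ρ = χ_{2(q+1)}^{q+1} the quadratic character. Then V_2 + V_3 = (1/(4(q+1))) Σ_{u=0,1} Σ_{h=0}^{2q+1} G_{q²}(χ_{2(q+1)}^{−h}ρ^u) G_{q²}(χ_{2(q+1)}^{−h}) χ_{2(q+1)}^h(ab) ρ^u(a) ( Σ_{i∈A} χ_{2(q+1)}^h(ω^i) + Σ_{i∈B}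 χ_{2(q+1)}^h(ω^i) ρ^u(ω) ). -/
noncomputable section

/-!
Summing over `y` first turns `V₂` and `V₃` into sums over `x ∈ K*` of Kloosterman sums of `L`
twisted by `ρ ^ u`; the orthogonality relation of the powers `ρ ^ u` detects the classes `C_0` and
`C_1`. Replacing `y` by `x * y` in these sums makes them depend on `x` only through `x ^ 2`, as
`ρ` is trivial on `K*`. On the other side, the Mellin transform of a twisted Kloosterman sum is a
product of two Gauss sums, and averaging over the characters `χ⁻ʰ` inverts it up to summation over
the kernel of `χ`. That kernel and the group of squares of `K*` are subgroups of the cyclic group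
`L*` of the same order, hence equal.
-/

section Kloosterman

variable {F R : Type*} [Field F] [Fintype F] [CommRing R]

/-- The twisted Kloosterman sum `∑ y ≠ 0, η(y) ψ(a y + b y⁻¹)`. The sum may run over all of `F`
because `η 0 = 0`, also for the trivial character. -/
def kloostermanSum (ψ : AddChar F R) (η : MulChar F R) (a b : F) : R :=
  ∑ y, η y * ψ (a * y + b * y⁻¹)

theorem apply_mul_kloostermanSum_mul (ψ : AddChar F R) (η : MulChar F R) (a b : F) {c : F}
    (hc : c ≠ 0) :
    η c * kloostermanSum ψ η (a * c) (b * c) = kloostermanSum ψ η a (b * c ^ 2) := by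
  unfold kloostermanSum
  rw [Finset.mul_sum]
  refine Fintype.sum_equiv (Equiv.mulLeft₀ c hc) _ _ fun y => ?_
  have harg : a * c * y + b * c * y⁻¹ = a * (c * y) + b * c ^ 2 * (c * y)⁻¹ := by
    rcases eq_or_ne y 0 with rfl | hy
    · simp
    · field_simp
  rw [harg, ← mul_assoc, ← map_mul, Equiv.mulLeft₀_apply]

theorem sum_mul_addChar_mul_inv (ψ : AddChar F R) (φ : MulChar F R) {y : F} (hy : y ≠ 0) :
    ∑ s, φ s * ψ (s * y⁻¹) = φ y * gaussSum φ ψ := by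
  have shift := gaussSum_mulShift φ (ψ.mulShift y⁻¹) (Units.mk0 y hy)
  rw [AddChar.mulShift_mulShift, Units.val_mk0, inv_mul_cancel₀ hy, AddChar.mulShift_one] at shift
  rw [shift, gaussSum]
  simp only [AddChar.mulShift_apply, mul_comm]

theorem sum_mul_kloostermanSum (ψ : AddChar F R) (φ η : MulChar F R) {a b : F}
    (ha : a ≠ 0) (hb : b ≠ 0) :
    φ (a * b) * η a * ∑ s, φ s * kloostermanSum ψ η a (b * s) =
      gaussSum (φ * η) ψ * gaussSum φ ψ := by
  have absorb_b : φ b * ∑ s, φ s * kloostermanSum ψ η a (b * s) =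
      ∑ s, φ s * kloostermanSum ψ η a s := by
    rw [Finset.mul_sum]
    refine Fintype.sum_equiv (Equiv.mulLeft₀ b hb) _ _ fun s => ?_
    rw [← mul_assoc, ← map_mul, Equiv.mulLeft₀_apply]
  have sum_over_s : ∀ y, ∑ s, φ s * (η y * ψ (a * y + s * y⁻¹)) =
      (φ * η) y * ψ (a * y) * gaussSum φ ψ := fun y => by
    rcases eq_or_ne y 0 with rfl | hy
    · simp [MulChar.map_zero]
    · rw [MulChar.mul_apply, mul_assoc (φ y), mul_right_comm, ← sum_mul_addChar_mul_inv ψ φ hy,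
        Finset.sum_mul]
      refine Finset.sum_congr rfl fun s _ => ?_
      rw [AddChar.map_add_eq_mul]
      ring
  calc φ (a * b) * η a * ∑ s, φ s * kloostermanSum ψ η a (b * s)
      = (φ * η) a * ∑ s, ∑ y, φ s * (η y * ψ (a * y + s * y⁻¹)) := by
        have unfold_sum : ∑ s, ∑ y, φ s * (η y * ψ (a * y + s * y⁻¹)) =
            ∑ s, φ s * kloostermanSum ψ η a s := by simp only [kloostermanSum, Finset.mul_sum]
        rw [unfold_sum, ← absorb_b, map_mul, MulChar.mul_apply]
        ring
    _ = (φ * η) a * gaussSum (φ * η) (ψ.mulShift a) * gaussSum φ ψ := by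
        rw [Finset.sum_comm, Finset.sum_congr rfl fun y _ => sum_over_s y, ← Finset.sum_mul,
          mul_assoc]
        simp only [gaussSum, AddChar.mulShift_apply]
    _ = gaussSum (φ * η) ψ * gaussSum φ ψ := by
        rw [← gaussSum_mulShift (φ * η) ψ (Units.mk0 a ha), Units.val_mk0]

end Kloosterman

section MulCharOfFiniteField

variable {F R : Type*} [Field F] [CommRing R]

theorem isPrimitiveRoot_mulChar_generator (χ : MulChar F R) {w : Fˣ}
    (hw : ∀ x, x ∈ Subgroup.zpowers w) : IsPrimitiveRoot (χ w) (orderOf χ) := by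
  refine IsPrimitiveRoot.iff_orderOf.2 (orderOf_eq_orderOf_iff.2 fun n => ?_)
  rw [← MulChar.pow_apply_coe, ← MulChar.one_apply_coe w, ← MulChar.eq_iff hw]

theorem orderOf_mul_card_ker_toUnitHom [Finite F] (χ : MulChar F R) :
    orderOf χ * Nat.card χ.toUnitHom.ker = Nat.card Fˣ := by
  obtain ⟨w, hw⟩ := IsCyclic.exists_generator (α := Fˣ)
  have hrange : χ.toUnitHom.range = Subgroup.zpowers (χ.toUnitHom w) := by
    rw [MonoidHom.range_eq_map, ← (Subgroup.eq_top_iff' _).2 hw, MonoidHom.map_zpowers]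
  rw [← Subgroup.index_mul_card χ.toUnitHom.ker, Subgroup.index_ker, hrange, Nat.card_zpowers,
    ← orderOf_units, MulChar.coe_toUnitHom, (isPrimitiveRoot_mulChar_generator χ hw).eq_orderOf]

theorem inv_mulChar_apply_eq_one_iff [Nontrivial R] {χ : MulChar F R} {x : F} :
    χ⁻¹ x = 1 ↔ χ x = 1 := by
  have of_inv : ∀ φ : MulChar F R, φ⁻¹ x = 1 → φ x = 1 := fun φ h => by
    have hx : IsUnit x := MulChar.apply_ne_zero_iff.1 (h ▸ one_ne_zero)
    have hprod : φ⁻¹ x * φ x = 1 := by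
      rw [← MulChar.mul_apply, inv_mul_cancel, MulChar.one_apply hx]
    rwa [h, one_mul] at hprod
  exact ⟨of_inv χ, fun h => of_inv χ⁻¹ (by rwa [inv_inv])⟩

variable [IsDomain R]

theorem sum_range_pow_mulChar [DecidableEq R] {χ : MulChar F R} {n : ℕ} (hχ : χ ^ n = 1)
    (x : F) : ∑ h ∈ Finset.range n, (χ ^ h) x = if χ x = 1 then (n : R) else 0 := by
  rcases eq_or_ne x 0 with rfl | hx
  · simp [MulChar.map_zero]
  · have hpow : ∀ h : ℕ, (χ ^ h) x = χ x ^ h := fun h => χ.pow_apply_coe h (Units.mk0 x hx)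
    simp only [hpow]
    split_ifs with h1
    · simp [h1]
    · refine (mul_eq_zero.1 ?_).resolve_right (sub_ne_zero.2 h1)
      rw [geom_sum_mul, ← hpow, hχ, MulChar.one_apply hx.isUnit, sub_self]

theorem sum_range_gaussSum_mul_gaussSum [Fintype F] [DecidableEq R] (ψ : AddChar F R)
    {χ : MulChar F R} {n : ℕ} (hχ : χ ^ n = 1) (η : MulChar F R) {a b : F}
    (ha : a ≠ 0) (hb : b ≠ 0) :
    ∑ h ∈ Finset.range n,
        gaussSum (χ ^ (-(h : ℤ)) * η) ψ * gaussSum (χ ^ (-(h : ℤ))) ψ * (χ ^ h) (a * b) =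
      η a * (n * ∑ s with χ s = 1, kloostermanSum ψ η a (b * s)) := by
  have mellin : ∀ h : ℕ,
      gaussSum (χ ^ (-(h : ℤ)) * η) ψ * gaussSum (χ ^ (-(h : ℤ))) ψ * (χ ^ h) (a * b) =
        η a * ∑ s, (χ⁻¹ ^ h) s * kloostermanSum ψ η a (b * s) := fun h => by
    have hinv : (χ⁻¹ ^ h) (a * b) * (χ ^ h) (a * b) = 1 := by
      rw [← MulChar.mul_apply, ← mul_pow, inv_mul_cancel, one_pow,
        MulChar.one_apply (mul_ne_zero ha hb).isUnit]
    rw [zpow_neg, zpow_natCast, ← inv_pow, ← sum_mul_kloostermanSum ψ _ η ha hb]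
    linear_combination (η a * ∑ s, (χ⁻¹ ^ h) s * kloostermanSum ψ η a (b * s)) * hinv
  rw [Finset.sum_congr rfl fun h _ => mellin h, ← Finset.mul_sum, Finset.sum_comm]
  simp only [← Finset.sum_mul, sum_range_pow_mulChar (by rw [inv_pow, hχ, inv_one] : χ⁻¹ ^ n = 1),
    inv_mulChar_apply_eq_one_iff, ite_mul, zero_mul]
  rw [← Finset.sum_filter, ← Finset.mul_sum, Finset.mul_sum]

theorem natCast_orderOf_mulChar_ne_zero [Finite F] (χ : MulChar F R) : (orderOf χ : R) ≠ 0 := by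
  obtain ⟨w, hw⟩ := IsCyclic.exists_generator (α := Fˣ)
  have : NeZero (orderOf χ) := ⟨χ.orderOf_pos.ne'⟩
  exact (isPrimitiveRoot_mulChar_generator χ hw).neZero'.out

end MulCharOfFiniteField

section CyclicGroup

theorem eq_ker_powMonoidHom_card {G : Type*} [CommGroup G] [IsCyclic G] [Finite G]
    (H : Subgroup G) : H = (powMonoidHom (Nat.card H) : G →* G).ker := by
  refine Subgroup.eq_of_le_of_card_ge (fun x hx => ?_) ?_
  · exact orderOf_dvd_iff_pow_eq_one.1 (H.orderOf_dvd_natCard hx)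
  · rw [IsCyclic.card_powMonoidHom_ker]
    exact Nat.gcd_le_right _ Nat.card_pos

theorem eq_of_card_eq_of_isCyclic {G : Type*} [CommGroup G] [IsCyclic G] [Finite G]
    {H₁ H₂ : Subgroup G} (h : Nat.card H₁ = Nat.card H₂) : H₁ = H₂ := by
  rw [eq_ker_powMonoidHom_card H₁, eq_ker_powMonoidHom_card H₂, h]

theorem sum_comp_monoidHom {G H M : Type*} [Group G] [Fintype G] [Group H] [Fintype H]
    [AddCommMonoid M] (g : G →* H) [DecidablePred (· ∈ g.range)] (f : H → M) :
    ∑ x, f (g x) = Nat.card g.ker • ∑ y with y ∈ g.range, f y := by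
  classical
  have hfiber : ∀ y ∈ g.range, Finset.card {x | g x = y} = Nat.card g.ker := fun y hy => by
    rw [MonoidHom.card_fiber_eq_of_mem_range g hy g.range.one_mem]
    exact (Nat.subtype_card _ fun x => by simp [MonoidHom.mem_ker]).symm
  have himage : Finset.univ.image g = ({y | y ∈ g.range} : Finset H) := by
    ext y
    simp [MonoidHom.mem_range]
  rw [Finset.sum_comp, himage, Finset.smul_sum]
  refine Finset.sum_congr rfl fun y hy => ?_
  rw [hfiber y (Finset.mem_filter.1 hy).2]

end CyclicGroup

section FiniteSums

variable {α M : Type*} [Fintype α] [AddCommMonoid M]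

theorem finsum_mem_eq_sum_univ_filter (s : Set α) [DecidablePred (· ∈ s)] (f : α → M) :
    ∑ᶠ x ∈ s, f x = ∑ x with x ∈ s, f x :=
  finsum_mem_eq_sum_of_inter_support_eq f (by simp)

theorem sum_filter_eq_sum_units_filter [GroupWithZero α] [Fintype αˣ] {p : α → Prop}
    [DecidablePred p] (hp : ∀ x, p x → x ≠ 0) (f : α → M) :
    ∑ x with p x, f x = ∑ x ∈ Finset.univ.filter (fun x : αˣ => p ↑x), f x := by
  refine (Finset.sum_nbij Units.val ?_ Units.val_injective.injOn ?_ fun _ _ => rfl).symm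
  · simp
  · intro x hx
    have hpx : p x := by simpa using hx
    exact ⟨Units.mk0 x (hp x hpx), by simpa using hpx, rfl⟩

end FiniteSums

section SubfieldPowers

variable {K L R : Type*} [Field K] [Field L] [Algebra K L]

variable (K L) in
/-- The `d`-th power map on the units of `K`, with values in the units of an extension `L`. -/
def powUnitsHom (d : ℕ) : Kˣ →* Lˣ :=
  (Units.map (algebraMap K L : K →* L)).comp (powMonoidHom d)

@[simp]
theorem coe_powUnitsHom (d : ℕ) (x : Kˣ) : (powUnitsHom K L d x : L) = algebraMap K L x ^ d := by
  simp [powUnitsHom]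

variable [Finite K] {d : ℕ}

theorem card_ker_powUnitsHom (hd : d ∣ Nat.card Kˣ) : Nat.card (powUnitsHom K L d).ker = d := by
  have hker : (powUnitsHom K L d).ker = (powMonoidHom d : Kˣ →* Kˣ).ker :=
    MonoidHom.ker_comp_of_injective _ _ (Units.map_injective (algebraMap K L).injective)
  rw [hker, IsCyclic.card_powMonoidHom_ker, Nat.gcd_eq_right hd]

variable [CommRing R] {χ : MulChar L R}

theorem ker_toUnitHom_eq_range_powUnitsHom [Finite L] (hd : d ∣ Nat.card Kˣ)
    (hχ : orderOf χ * Nat.card Kˣ = d * Nat.card Lˣ) :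
    χ.toUnitHom.ker = (powUnitsHom K L d).range := by
  refine eq_of_card_eq_of_isCyclic (Nat.eq_of_mul_eq_mul_left
    (Nat.mul_pos (Nat.pos_of_dvd_of_pos hd Nat.card_pos) χ.orderOf_pos) ?_)
  have hrange : d * Nat.card (powUnitsHom K L d).range = Nat.card Kˣ := by
    rw [← Subgroup.index_ker, ← Subgroup.card_mul_index (powUnitsHom K L d).ker,
      card_ker_powUnitsHom hd]
  rw [mul_assoc, orderOf_mul_card_ker_toUnitHom, ← hχ, ← hrange]
  ring

theorem mulChar_apply_eq_one_iff_mem_range [Finite L] (hd : d ∣ Nat.card Kˣ)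
    (hχ : orderOf χ * Nat.card Kˣ = d * Nat.card Lˣ) (s : Lˣ) :
    χ s = 1 ↔ s ∈ (powUnitsHom K L d).range := by
  rw [← ker_toUnitHom_eq_range_powUnitsHom hd hχ, MonoidHom.mem_ker, ← Units.val_inj,
    MulChar.coe_toUnitHom, Units.val_one]

theorem sum_ne_zero_algebraMap_pow [Nontrivial R] [Fintype K] [Fintype L] [DecidableEq K]
    [DecidableEq R] (hd : d ∣ Nat.card Kˣ) (hχ : orderOf χ * Nat.card Kˣ = d * Nat.card Lˣ)
    (f : L → R) :
    ∑ x : K with x ≠ 0, f (algebraMap K L x ^ d) = d * ∑ s with χ s = 1, f s := by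
  classical
  have hker : ∀ s, χ s = 1 → s ≠ 0 := by
    rintro s hs rfl
    exact zero_ne_one (χ.map_zero.symm.trans hs)
  have hsum := sum_comp_monoidHom (powUnitsHom K L d) fun s => f s
  simp only [coe_powUnitsHom, card_ker_powUnitsHom hd, nsmul_eq_mul,
    ← mulChar_apply_eq_one_iff_mem_range hd hχ] at hsum
  rw [sum_filter_eq_sum_units_filter (fun _ => id), sum_filter_eq_sum_units_filter hker, ← hsum]
  simp

end SubfieldPowers

section CyclotomicClasses

variable {L : Type} [Field L]

theorem IsPrim.exists_units_generator [Nontrivial Lˣ] {ω : L} (hω : IsPrim L ω) :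
    ∃ w : Lˣ, (w : L) = ω ∧ ∀ x, x ∈ Subgroup.zpowers w := by
  have hω0 : ω ≠ 0 := by
    rintro rfl
    obtain ⟨x, hx⟩ := exists_ne (1 : Lˣ)
    obtain ⟨n, hn⟩ := hω x x.ne_zero
    rcases n.eq_zero_or_pos with rfl | hpos
    · exact hx (Units.ext (by simpa using hn))
    · exact x.ne_zero (by rw [hn, zero_pow hpos.ne'])
  refine ⟨Units.mk0 ω hω0, rfl, fun x => ?_⟩
  obtain ⟨n, hn⟩ := hω x x.ne_zero
  exact ⟨n, Units.ext (by simpa using hn.symm)⟩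

variable {R : Type*} [CommRing R]

theorem mem_cyc_iff [Finite L] [Nontrivial R] (ρ : MulChar L R) {w : Lˣ}
    (hw : ∀ x, x ∈ Subgroup.zpowers w) (j : ℕ) {y : L} :
    y ∈ cyc L w (orderOf ρ) j ↔ ρ (y * ((w : L) ^ j)⁻¹) = 1 := by
  have hwj : (w : L) ^ j ≠ 0 := pow_ne_zero j w.ne_zero
  constructor
  · rintro ⟨k, rfl⟩
    rw [mul_right_comm, mul_inv_cancel₀ hwj, one_mul, map_pow, map_pow, ← MulChar.pow_apply_coe,
      pow_orderOf_eq_one, MulChar.one_apply_coe, one_pow]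
  · intro hy
    have hunit : IsUnit (y * ((w : L) ^ j)⁻¹) := MulChar.apply_ne_zero_iff.1 (hy ▸ one_ne_zero)
    obtain ⟨m, hm⟩ := mem_powers_iff_mem_zpowers.2 (hw hunit.unit)
    have hm' : (w : L) ^ m = y * ((w : L) ^ j)⁻¹ := by simpa using congrArg Units.val hm
    rw [← hm', map_pow] at hy
    obtain ⟨k, rfl⟩ := (isPrimitiveRoot_mulChar_generator ρ hw).dvd_of_pow_eq_one m hy
    exact ⟨k, by rw [← pow_mul, hm', mul_comm y, mul_inv_cancel_left₀ hwj]⟩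

theorem orderOf_mul_finsum_mem_cyc [Fintype L] [IsDomain R] (ρ : MulChar L R) {w : Lˣ}
    (hw : ∀ x, x ∈ Subgroup.zpowers w) (j : ℕ) (f : L → R) :
    orderOf ρ * ∑ᶠ y ∈ cyc L w (orderOf ρ) j, f y =
      ∑ u ∈ Finset.range (orderOf ρ), (ρ ^ u)⁻¹ ((w : L) ^ j) * ∑ y, (ρ ^ u) y * f y := by
  classical
  calc orderOf ρ * ∑ᶠ y ∈ cyc L w (orderOf ρ) j, f y
      = ∑ y, (∑ u ∈ Finset.range (orderOf ρ), (ρ ^ u) (y * ((w : L) ^ j)⁻¹)) * f y := by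
        simp only [sum_range_pow_mulChar (pow_orderOf_eq_one ρ), ite_mul, zero_mul]
        rw [finsum_mem_eq_sum_univ_filter, Finset.mul_sum, Finset.sum_filter]
        simp only [mem_cyc_iff ρ hw]
    _ = ∑ u ∈ Finset.range (orderOf ρ), (ρ ^ u)⁻¹ ((w : L) ^ j) * ∑ y, (ρ ^ u) y * f y := by
        simp only [Finset.sum_mul, Finset.mul_sum, map_mul, MulChar.inv_apply']
        rw [Finset.sum_comm]
        exact Finset.sum_congr rfl fun u _ => Finset.sum_congr rfl fun y _ => by ring

end CyclotomicClasses

section CosetSums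

theorem orderOf_mul_sum_kloostermanSum {K L R : Type*} [Field K] [Fintype K] [DecidableEq K]
    [Field L] [Fintype L] [Algebra K L] [CommRing R] [IsDomain R] (h2 : 2 ∣ Nat.card Kˣ)
    {χ η : MulChar L R} (hχ : orderOf χ * Nat.card Kˣ = 2 * Nat.card Lˣ)
    (hη : ∀ x : K, x ≠ 0 → η (algebraMap K L x) = 1) (ψ : AddChar L R) {a b : L}
    (ha : a ≠ 0) (hb : b ≠ 0) :
    orderOf χ * ∑ x : K with x ≠ 0,
        kloostermanSum ψ η (a * algebraMap K L x) (b * algebraMap K L x) =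
      2 * (η⁻¹ a * ∑ h ∈ Finset.range (orderOf χ),
        gaussSum (χ ^ (-(h : ℤ)) * η) ψ * gaussSum (χ ^ (-(h : ℤ))) ψ * (χ ^ h) (a * b)) := by
  classical
  have hinv : η⁻¹ a * η a = 1 := by
    rw [← MulChar.mul_apply, inv_mul_cancel, MulChar.one_apply ha.isUnit]
  have to_squares : ∀ x : K, x ≠ 0 →
      kloostermanSum ψ η (a * algebraMap K L x) (b * algebraMap K L x) =
        kloostermanSum ψ η a (b * algebraMap K L x ^ 2) := fun x hx => by
    rw [← apply_mul_kloostermanSum_mul ψ η a b ((map_ne_zero _).2 hx), hη x hx, one_mul]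
  rw [Finset.sum_congr rfl fun x hx => to_squares x (Finset.mem_filter.1 hx).2,
    sum_ne_zero_algebraMap_pow h2 hχ fun s => kloostermanSum ψ η a (b * s),
    sum_range_gaussSum_mul_gaussSum ψ (pow_orderOf_eq_one χ) η ha hb, ← mul_assoc (η⁻¹ a), hinv]
  push_cast
  ring

theorem sum_apply_mul_finsum_addChar {K L R : Type*} [Field K] [Fintype K] [DecidableEq K]
    [Field L] [Fintype L] [Algebra K L] [CommRing R] (ψ : AddChar L R) (η : MulChar L R)
    (a b : L) (c : L) :
    ∑ y, η y * ∑ᶠ x ∈ {x : K | x ≠ 0},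
        ψ (a * (algebraMap K L x * y)) * ψ (b * (algebraMap K L x * y⁻¹ * c)) =
      ∑ x : K with x ≠ 0,
        kloostermanSum ψ η (a * algebraMap K L x) (b * c * algebraMap K L x) := by
  simp_rw [finsum_mem_eq_sum_univ_filter, Set.mem_ofPred_eq, Finset.mul_sum, kloostermanSum]
  rw [Finset.sum_comm]
  refine Finset.sum_congr rfl fun x _ => Finset.sum_congr rfl fun y _ => ?_
  rw [← AddChar.map_add_eq_mul]
  ring_nf

theorem orderOf_mul_orderOf_mul_finsum_cyc {K R : Type*} {L : Type} [Field K] [Finite K]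
    [Field L] [Fintype L] [Algebra K L] [CommRing R] [IsDomain R] (h2 : 2 ∣ Nat.card Kˣ)
    {χ ρ : MulChar L R} (hχ : orderOf χ * Nat.card Kˣ = 2 * Nat.card Lˣ)
    (hρ : ∀ x : K, x ≠ 0 → ρ (algebraMap K L x) = 1) {w : Lˣ}
    (hw : ∀ x, x ∈ Subgroup.zpowers w) (j : ℕ) (ψ : AddChar L R) {a b c : L}
    (ha : a ≠ 0) (hb : b ≠ 0) (hc : c ≠ 0) :
    orderOf χ * (orderOf ρ * ∑ᶠ y ∈ cyc L w (orderOf ρ) j, ∑ᶠ x ∈ {x : K | x ≠ 0},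
        ψ (a * (algebraMap K L x * y)) * ψ (b * (algebraMap K L x * y⁻¹ * c))) =
      2 * ∑ u ∈ Finset.range (orderOf ρ), ∑ h ∈ Finset.range (orderOf χ),
        gaussSum (χ ^ (-(h : ℤ)) * ρ ^ u) ψ * gaussSum (χ ^ (-(h : ℤ))) ψ *
          (χ ^ h) (a * b * c) * (ρ ^ u)⁻¹ (a * (w : L) ^ j) := by
  classical
  have := Fintype.ofFinite K
  have hρu : ∀ u : ℕ, ∀ x : K, x ≠ 0 → (ρ ^ u) (algebraMap K L x) = 1 := fun u x hx => by
    rw [← Units.val_mk0 ((map_ne_zero (algebraMap K L)).2 hx), MulChar.pow_apply_coe,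
      Units.val_mk0, hρ x hx, one_pow]
  rw [orderOf_mul_finsum_mem_cyc ρ hw, Finset.mul_sum, Finset.mul_sum]
  refine Finset.sum_congr rfl fun u _ => ?_
  rw [sum_apply_mul_finsum_addChar, mul_left_comm,
    orderOf_mul_sum_kloostermanSum h2 hχ (hρu u) ψ ha (mul_ne_zero hb hc), ← Finset.sum_mul,
    map_mul, mul_assoc a b c]
  ring

end CosetSums

section QuadraticExtension

variable {K L : Type*} [Field K] [Fintype K] [Field L] [Fintype L]

theorem card_units_of_card_eq_sq (hL : Fintype.card L = Fintype.card K ^ 2) :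
    Nat.card Lˣ = (Fintype.card K + 1) * Nat.card Kˣ := by
  rw [Nat.card_units, Nat.card_units, Nat.card_eq_fintype_card, Nat.card_eq_fintype_card, hL,
    ← one_pow 2, Nat.sq_sub_sq, one_pow]

variable {R : Type*} [CommRing R] {χ : MulChar L R}

theorem orderOf_mul_card_units (hL : Fintype.card L = Fintype.card K ^ 2)
    (hχ : orderOf χ = 2 * (Fintype.card K + 1)) :
    orderOf χ * Nat.card Kˣ = 2 * Nat.card Lˣ := by
  rw [hχ, card_units_of_card_eq_sq hL, mul_assoc]

theorem two_dvd_card_units (hL : Fintype.card L = Fintype.card K ^ 2)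
    (hχ : orderOf χ = 2 * (Fintype.card K + 1)) : 2 ∣ Nat.card Kˣ := by
  have hcard := orderOf_mul_card_ker_toUnitHom χ
  rw [hχ, card_units_of_card_eq_sq hL, mul_comm 2, mul_assoc] at hcard
  exact ⟨_, (Nat.eq_of_mul_eq_mul_left (Nat.succ_pos _) hcard).symm⟩

theorem pow_card_add_one_apply_algebraMap [Algebra K L]
    (hL : Fintype.card L = Fintype.card K ^ 2) (hχ : orderOf χ = 2 * (Fintype.card K + 1))
    {x : K} (hx : x ≠ 0) : (χ ^ (Fintype.card K + 1)) (algebraMap K L x) = 1 := by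
  have hsq : ((powUnitsHom K L 2 (Units.mk0 x hx) : Lˣ) : L) =
      algebraMap K L x ^ (Fintype.card K + 1) := by
    rw [coe_powUnitsHom, Units.val_mk0, pow_succ _ (Fintype.card K), ← map_pow _ x (Fintype.card K),
      FiniteField.pow_card, ← sq]
  rw [χ.pow_apply' (Nat.succ_ne_zero _), ← map_pow, ← hsq]
  exact (mulChar_apply_eq_one_iff_mem_range (two_dvd_card_units hL hχ)
    (orderOf_mul_card_units hL hχ) _).2 ⟨_, rfl⟩

end QuadraticExtension

section QuadraticCyclotomicClasses

variable {K R : Type*} {L : Type} [Field K] [Fintype K] [Field L] [Fintype L] [Algebra K L]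
  [Field R] {χ : MulChar L R}

theorem finsum_cyc_two_eq (hL : Fintype.card L = Fintype.card K ^ 2)
    (hχ : orderOf χ = 2 * (Fintype.card K + 1)) {ρ : MulChar L R}
    (hρ : ρ = χ ^ (Fintype.card K + 1)) {w : Lˣ} (hw : ∀ x, x ∈ Subgroup.zpowers w) (j : ℕ)
    (ψ : AddChar L R) {a b c : L} (ha : a ≠ 0) (hb : b ≠ 0) (hc : c ≠ 0) :
    ∑ᶠ y ∈ cyc L w 2 j, ∑ᶠ x ∈ {x : K | x ≠ 0},
        ψ (a * (algebraMap K L x * y)) * ψ (b * (algebraMap K L x * y⁻¹ * c)) =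
      1 / (2 * ((Fintype.card K : R) + 1)) *
        ∑ u ∈ Finset.range 2, ∑ h ∈ Finset.range (2 * Fintype.card K + 2),
          gaussSum (χ ^ (-(h : ℤ)) * ρ ^ u) ψ * gaussSum (χ ^ (-(h : ℤ))) ψ *
            (χ ^ h) (a * b) * (ρ ^ u) a * ((χ ^ h) c * (ρ ^ u) ((w : L) ^ j)) := by
  have hρ_order : orderOf ρ = 2 := by
    rw [hρ, orderOf_pow_of_dvd (Nat.succ_ne_zero _) (hχ ▸ Dvd.intro_left 2 rfl), hχ,
      Nat.mul_div_cancel _ (Nat.succ_pos _)]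
  have hρ_inv : ∀ u : ℕ, (ρ ^ u)⁻¹ = ρ ^ u := fun u => by
    rw [← inv_pow, inv_eq_of_mul_eq_one_left (by rw [← sq, ← hρ_order, pow_orderOf_eq_one])]
  have hne : (2 : R) * (Fintype.card K + 1) ≠ 0 := by
    simpa [hχ] using natCast_orderOf_mulChar_ne_zero χ
  have h2 : (2 : R) ≠ 0 := left_ne_zero_of_mul hne
  have key := orderOf_mul_orderOf_mul_finsum_cyc (two_dvd_card_units hL hχ)
    (orderOf_mul_card_units hL hχ) (fun x hx => hρ ▸ pow_card_add_one_apply_algebraMap hL hχ hx)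
    hw j ψ ha hb hc
  rw [hρ_order, hχ] at key
  push_cast at key
  rw [one_div, eq_inv_mul_iff_mul_eq₀ hne]
  refine mul_left_cancel₀ h2 (Eq.trans (by ring) (key.trans ?_))
  congr 1
  refine Finset.sum_congr rfl fun u _ => Finset.sum_congr (by ring_nf) fun h _ => ?_
  rw [hρ_inv, map_mul (χ ^ h) (a * b), map_mul (ρ ^ u) a]
  ring

theorem half_mul_sum_finsum_cyc_two_eq (hL : Fintype.card L = Fintype.card K ^ 2)
    (hχ : orderOf χ = 2 * (Fintype.card K + 1)) {ρ : MulChar L R}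
    (hρ : ρ = χ ^ (Fintype.card K + 1)) {w : Lˣ} (hw : ∀ x, x ∈ Subgroup.zpowers w) (j : ℕ)
    (ψ : AddChar L R) (S : Finset ℕ) {a b : L} (ha : a ≠ 0) (hb : b ≠ 0) :
    1 / 2 * ∑ i ∈ S, ∑ᶠ y ∈ cyc L w 2 j, ∑ᶠ x ∈ {x : K | x ≠ 0},
        ψ (a * (algebraMap K L x * y)) * ψ (b * (algebraMap K L x * y⁻¹ * (w : L) ^ i)) =
      1 / (4 * ((Fintype.card K : R) + 1)) *
        ∑ u ∈ Finset.range 2, ∑ h ∈ Finset.range (2 * Fintype.card K + 2),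
          gaussSum (χ ^ (-(h : ℤ)) * ρ ^ u) ψ * gaussSum (χ ^ (-(h : ℤ))) ψ *
            (χ ^ h) (a * b) * (ρ ^ u) a *
              ((∑ i ∈ S, (χ ^ h) ((w : L) ^ i)) * (ρ ^ u) ((w : L) ^ j)) := by
  have hconst : 1 / 2 * (1 / (2 * ((Fintype.card K : R) + 1))) =
      1 / (4 * ((Fintype.card K : R) + 1)) := by
    rw [one_div_mul_one_div, ← mul_assoc]
    norm_num
  rw [Finset.sum_congr rfl fun i _ =>
      finsum_cyc_two_eq hL hχ hρ hw j ψ ha hb (pow_ne_zero i w.ne_zero),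
    ← Finset.mul_sum, ← mul_assoc, hconst, Finset.sum_comm]
  congr 1
  refine Finset.sum_congr rfl fun u _ => ?_
  rw [Finset.sum_comm]
  refine Finset.sum_congr rfl fun h _ => ?_
  rw [← Finset.mul_sum, Finset.sum_mul]

end QuadraticCyclotomicClasses

theorem wilson_xiang_V2_V3_general {K R : Type*} {L : Type} [Field K] [Fintype K] [Field L]
    [Fintype L] [Algebra K L] [Field R] {q : ℕ} (hK : Fintype.card K = q)
    (hL : Fintype.card L = q ^ 2) {ω : L} (hω : IsPrim L ω) (ψ : AddChar L R)
    (A B : Finset ℕ) {a b : L} (ha : a ≠ 0) (hb : b ≠ 0) {χ : MulChar L R}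
    (hχ : orderOf χ = 2 * (q + 1)) {ρ : MulChar L R} (hρ : ρ = χ ^ (q + 1)) {V₂ V₃ : R}
    (hV₂ : V₂ = 1 / 2 * ∑ i ∈ A, ∑ᶠ y ∈ cyc L ω 2 0, ∑ᶠ x ∈ {x : K | x ≠ 0},
      ψ (a * (algebraMap K L x * y)) * ψ (b * (algebraMap K L x * y⁻¹ * ω ^ i)))
    (hV₃ : V₃ = 1 / 2 * ∑ i ∈ B, ∑ᶠ y ∈ cyc L ω 2 1, ∑ᶠ x ∈ {x : K | x ≠ 0},
      ψ (a * (algebraMap K L x * y)) * ψ (b * (algebraMap K L x * y⁻¹ * ω ^ i))) :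
    V₂ + V₃ = 1 / (4 * ((q : R) + 1)) *
      ∑ u ∈ Finset.range 2, ∑ h ∈ Finset.range (2 * q + 2),
        gaussSum (χ ^ (-(h : ℤ)) * ρ ^ u) ψ * gaussSum (χ ^ (-(h : ℤ))) ψ *
          (χ ^ h) (a * b) * (ρ ^ u) a *
          ((∑ i ∈ A, (χ ^ h) (ω ^ i)) + (∑ i ∈ B, (χ ^ h) (ω ^ i)) * (ρ ^ u) ω) := by
  subst hK
  have : Nontrivial Lˣ := Finite.one_lt_card_iff_nontrivial.1 <| by
    rw [card_units_of_card_eq_sq hL]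
    exact one_lt_mul_of_lt_of_le (Nat.succ_lt_succ Fintype.card_pos) Nat.card_pos
  obtain ⟨w, rfl, hw⟩ := hω.exists_units_generator
  rw [hV₂, hV₃, half_mul_sum_finsum_cyc_two_eq hL hχ hρ hw 0 ψ A ha hb,
    half_mul_sum_finsum_cyc_two_eq hL hχ hρ hw 1 ψ B ha hb]
  simp only [← mul_add, ← Finset.sum_add_distrib, pow_zero, map_one, mul_one, pow_one]

/-- Lemma 4.4: the Gauss-sum expansion of `V₂ + V₃`. -/
theorem wilson_xiang_V2_V3
    (p s q : ℕ) (hp : p.Prime) (hpodd : p ≠ 2) (hs : 0 < s) (hq : q = p ^ s)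
    (K L : Type) [Field K] [Fintype K] [Field L] [Fintype L] [Algebra K L] [CharP L p]
    (hK : Fintype.card K = q) (hL : Fintype.card L = q ^ 2)
    (ω : L) (hω : IsPrim L ω)
    (ψ : AddChar L ℂ) (hψ : ∀ x : L, ψ x = psiL p L x)
    (A B : Finset ℕ) (hA : ∀ i ∈ A, i < 2 * q + 2) (hB : ∀ i ∈ B, i < 2 * q + 2)
    (a b : L) (ha : a ≠ 0) (hb : b ≠ 0)
    (χ : MulChar L ℂ) (hχ : orderOf χ = 2 * (q + 1))
    (ρ : MulChar L ℂ) (hρ : ρ = χ ^ (q + 1))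
    (V₂ V₃ : ℂ)
    (hV₂ : V₂ = (1 / 2 : ℂ) * ∑ i ∈ A, ∑ᶠ y ∈ cyc L ω 2 0, ∑ᶠ x ∈ {x : K | x ≠ 0},
      ψ (a * (algebraMap K L x * y)) * ψ (b * (algebraMap K L x * y⁻¹ * ω ^ i)))
    (hV₃ : V₃ = (1 / 2 : ℂ) * ∑ i ∈ B, ∑ᶠ y ∈ cyc L ω 2 1, ∑ᶠ x ∈ {x : K | x ≠ 0},
      ψ (a * (algebraMap K L x * y)) * ψ (b * (algebraMap K L x * y⁻¹ * ω ^ i))) :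
    V₂ + V₃ = (1 / (4 * ((q : ℂ) + 1))) *
      ∑ u ∈ Finset.range 2, ∑ h ∈ Finset.range (2 * q + 2),
        gaussSum (χ ^ (-(h : ℤ)) * ρ ^ u) ψ * gaussSum (χ ^ (-(h : ℤ))) ψ *
          (χ ^ h) (a * b) * (ρ ^ u) a *
          ((∑ i ∈ A, (χ ^ h) (ω ^ i)) + (∑ i ∈ B, (χ ^ h) (ω ^ i)) * (ρ ^ u) ω) := by
  exact wilson_xiang_V2_V3_general hK hL hω ψ A B ha hb hχ hρ hV₂ hV₃

end
end
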